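/- arXiv:1607.05930 — 8 statements merged into one kernel-verified Lean document; each statement's English description precedes it below -/
import Mathlib

section
/- If T is a nontrivial tree, then pc_{1,2}(T) = σ'₂(T) − 1, where σ'₂(T) is the maximum of deg(x) + deg(y) over all pairs of adjacent vertices x, y of T. -/
open SimpleGraph

/-- A walk is *distance `ℓ`-proper* with respect to an edge-coloring `c` if any two
edges whose positions along the walk differ by at most `ℓ` receive distinct colors
(equivalently, no two edges of the same color appear with fewer than `ℓ` edges in
between on the walk). -/
def SimpleGraph.Walk.IsDistProper {V : Type*} {G : SimpleGraph V} {u v : V}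
    (ℓ : ℕ) (c : Sym2 V → ℕ) (p : G.Walk u v) : Prop :=
  ∀ (i j : ℕ) (hi : i < p.edges.length) (hj : j < p.edges.length),
    i < j → j ≤ i + ℓ → c (p.edges[i]'hi) ≠ c (p.edges[j]'hj)

/-- `c` is a `(1,ℓ)`-proper-path coloring of `G` using at most `k` colors
(the colors of edges of `G` lie in `{0, …, k-1}`): every pair of distinct vertices
is joined by a distance `ℓ`-proper path. -/
def SimpleGraph.IsPCColoring {V : Type*} (G : SimpleGraph V) (ℓ k : ℕ)
    (c : Sym2 V → ℕ) : Prop :=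
  (∀ e ∈ G.edgeSet, c e < k) ∧
  ∀ u v : V, u ≠ v → ∃ p : G.Walk u v, p.IsPath ∧ p.IsDistProper ℓ c

/-- The `(1,ℓ)`-proper connection number `pc_{1,ℓ}(G)`: the minimum number of colors
in an edge-coloring of `G` such that every pair of distinct vertices is connected by
a distance `ℓ`-proper path. -/
noncomputable def SimpleGraph.pc {V : Type*} (G : SimpleGraph V) (ℓ : ℕ) : ℕ :=
  sInf {k | ∃ c : Sym2 V → ℕ, G.IsPCColoring ℓ k c}

/-- `σ'₂(G)`: the largest sum of degrees of two adjacent vertices of `G`. -/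
noncomputable def SimpleGraph.sigmaTwo {V : Type*} [Fintype V] (G : SimpleGraph V)
    [DecidableRel G.Adj] : ℕ :=
  sSup {d | ∃ x y : V, G.Adj x y ∧ d = G.degree x + G.degree y}


theorem greedy_aux {α : Type*} [DecidableEq α] (S : Finset α) (R : α → α → Prop)
    (hR : ∀ a b, R a b → R b a) (rank : α → ℕ) (K : ℕ)
    (h : ∀ a ∈ S, ∃ B : Finset α, B.card < K ∧
      ∀ b ∈ S, b ≠ a → R a b → rank b ≤ rank a → b ∈ B) :
    ∃ c : α → ℕ, (∀ a ∈ S, c a < K) ∧ ∀ a ∈ S, ∀ b ∈ S, a ≠ b → R a b → c a ≠ c b := by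
  induction S using Finset.induction_on_max_value rank with
  | empty => exact ⟨fun _ => 0, by simp, by simp⟩
  | insert a s ha hmax ih =>
    obtain ⟨c, hc1, hc2⟩ := ih (fun x hx => by
      obtain ⟨B, hB, hB2⟩ := h x (Finset.mem_insert_of_mem hx)
      exact ⟨B, hB, fun b hb => hB2 b (Finset.mem_insert_of_mem hb)⟩)
    obtain ⟨B, hB, hB2⟩ := h a (Finset.mem_insert_self _ _)
    obtain ⟨k, hk, hk2⟩ : ∃ k ∈ Finset.range K, k ∉ B.image c := by
      apply Finset.exists_mem_notMem_of_card_lt_card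
      rw [Finset.card_range]
      exact lt_of_le_of_lt Finset.card_image_le hB
    have key : ∀ b ∈ s, R a b → k ≠ c b := by
      intro b hb hab hkb
      apply hk2
      rw [hkb]
      exact Finset.mem_image_of_mem c (hB2 b (Finset.mem_insert_of_mem hb)
        (fun e => ha (e ▸ hb)) hab (hmax b hb))
    refine ⟨fun x => if x = a then k else c x, ?_, ?_⟩
    · intro x hx
      rw [Finset.mem_range] at hk
      by_cases hxa : x = a
      · simp [hxa, hk]
      · simp only [hxa, if_false]
        exact hc1 x (Finset.mem_of_mem_insert_of_ne hx hxa)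
    · intro x hx y hy hxy hr
      by_cases hxa : x = a
      · have hya : y ≠ a := fun e => hxy (hxa.trans e.symm)
        simp only [hxa, hya, if_true, if_false]
        exact key y (Finset.mem_of_mem_insert_of_ne hy hya) (hxa ▸ hr)
      · by_cases hya : y = a
        · simp only [hxa, hya, if_true, if_false]
          exact (key x (Finset.mem_of_mem_insert_of_ne hx hxa) (hR _ _ (hya ▸ hr))).symm
        · simp only [hxa, hya, if_false]
          exact hc2 x (Finset.mem_of_mem_insert_of_ne hx hxa) y
            (Finset.mem_of_mem_insert_of_ne hy hya) hxy hr

theorem card_nb {V : Type*} [Fintype V] [DecidableEq V] (T : SimpleGraph V) [DecidableRel T.Adj]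
    {x y : V} (h : T.Adj x y) :
    (T.incidenceFinset x ∪ T.incidenceFinset y).card + 1 = T.degree x + T.degree y := by
  have h1 : T.incidenceFinset x ∩ T.incidenceFinset y = {s(x, y)} := by
    rw [← Finset.coe_inj]
    push_cast
    simpa using T.incidenceSet_inter_incidenceSet_of_adj h
  have := Finset.card_union_add_card_inter (T.incidenceFinset x) (T.incidenceFinset y)
  rw [h1, Finset.card_singleton] at this
  simpa using this

theorem parent_unique {V : Type*} (T : SimpleGraph V) (hT : T.IsTree) (r : V) {a b b' : V}
    (h : T.Adj a b) (h' : T.Adj a b') (hd : T.dist r a = T.dist r b + 1)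
    (hd' : T.dist r a = T.dist r b' + 1) : b = b' := by
  obtain ⟨p, hp⟩ := hT.connected.exists_walk_length_eq_dist b r
  obtain ⟨p', hp'⟩ := hT.connected.exists_walk_length_eq_dist b' r
  have e1 := (Walk.cons h p).isPath_of_length_eq_dist (by
    rw [Walk.length_cons, hp, T.dist_comm (u := a), hd, T.dist_comm (u := b)])
  have e2 := (Walk.cons h' p').isPath_of_length_eq_dist (by
    rw [Walk.length_cons, hp', T.dist_comm (u := a), hd', T.dist_comm (u := b')])
  have := congrArg (fun q : T.Walk a r => q.snd) ((hT.existsUnique_path a r).unique e1 e2)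
  simpa using this

theorem path_proper {V : Type*} (T : SimpleGraph V) (hT : T.IsTree) {c : Sym2 V → ℕ} {k : ℕ}
    (hc : T.IsPCColoring 2 k c) {u v : V} (huv : u ≠ v) (p : T.Walk u v) (hp : p.IsPath) :
    p.IsDistProper 2 c := by
  obtain ⟨q, hq, hq2⟩ := hc.2 u v huv
  rwa [(hT.existsUnique_path u v).unique hp hq]

theorem two_path {V : Type*} (T : SimpleGraph V) (hT : T.IsTree) {c : Sym2 V → ℕ} {k : ℕ}
    (hc : T.IsPCColoring 2 k c) {a x b : V} (h1 : T.Adj x a) (h2 : T.Adj x b) (hab : a ≠ b) :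
    c s(x, a) ≠ c s(x, b) := by
  have := path_proper T hT hc hab (Walk.cons h1.symm (Walk.cons h2 Walk.nil)) (by
    have := h1.ne
    have := h2.ne
    simp [Walk.cons_isPath_iff]; grind)
  have := this 0 1 (by simp) (by simp) (by simp) (by simp)
  simp only [Walk.edges_cons, List.getElem_cons_zero, List.getElem_cons_succ] at this
  rwa [Sym2.eq_swap]

theorem three_path {V : Type*} (T : SimpleGraph V) (hT : T.IsTree) {c : Sym2 V → ℕ} {k : ℕ}
    (hc : T.IsPCColoring 2 k c) {a x y b : V} (h : T.Adj x y) (h1 : T.Adj x a) (h2 : T.Adj y b)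
    (hay : a ≠ y) (hbx : b ≠ x) :
    c s(x, a) ≠ c s(y, b) := by
  have n1 := h.ne
  have n2 := h1.ne
  have n3 := h2.ne
  have hab : a ≠ b := by
    rintro rfl
    have e1 : (Walk.cons h1.symm (Walk.cons h Walk.nil)).IsPath := by
      simp [Walk.cons_isPath_iff]; grind
    have e2 : (Walk.cons h2.symm Walk.nil).IsPath := by
      simp [Walk.cons_isPath_iff]; grind
    have := congrArg Walk.length ((hT.existsUnique_path a y).unique e1 e2)
    simp at this
  have := path_proper T hT hc hab (Walk.cons h1.symm (Walk.cons h (Walk.cons h2 Walk.nil))) (by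
    simp [Walk.cons_isPath_iff]; grind)
  have := this 0 2 (by simp) (by simp) (by simp) (by simp)
  simp only [Walk.edges_cons, List.getElem_cons_zero, List.getElem_cons_succ] at this
  rwa [Sym2.eq_swap]

theorem mem_inc {V : Type*} [Fintype V] [DecidableEq V] (T : SimpleGraph V) [DecidableRel T.Adj]
    {x : V} {e : Sym2 V} : e ∈ T.incidenceFinset x ↔ ∃ a, T.Adj x a ∧ e = s(x, a) := by
  rw [mem_incidenceFinset]
  constructor
  · rintro ⟨h1, h2⟩
    obtain ⟨a, rfl⟩ := Sym2.mem_iff_exists.1 h2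
    exact ⟨a, h1, rfl⟩
  · rintro ⟨a, h, rfl⟩
    exact ⟨h, Sym2.mem_mk_left _ _⟩

theorem lower {V : Type*} [Fintype V] [DecidableEq V] (T : SimpleGraph V) [DecidableRel T.Adj]
    (hT : T.IsTree) {c : Sym2 V → ℕ} {k : ℕ}
    (hc : T.IsPCColoring 2 k c) {x y : V} (h : T.Adj x y) : T.degree x + T.degree y - 1 ≤ k := by
  have hcard := card_nb T h
  have : (T.incidenceFinset x ∪ T.incidenceFinset y).card ≤ (Finset.range k).card := by
    apply Finset.card_le_card_of_injOn c
    · intro e he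
      simp only [Finset.coe_range, Set.mem_Iio]
      apply hc.1
      simp only [Finset.coe_union, Set.mem_union, Finset.mem_coe, mem_incidenceFinset] at he
      exact he.elim (fun h => h.1) (fun h => h.1)
    · have mixed : ∀ a b, T.Adj x a → T.Adj y b → s(x, a) ≠ s(y, b) → c s(x, a) ≠ c s(y, b) := by
        intro a b ha hb hne
        by_cases hay : a = y
        · subst hay
          rw [Sym2.eq_swap]
          exact two_path T hT hc ha.symm hb (by rintro rfl; exact hne Sym2.eq_swap)
        · by_cases hbx : b = x
          · subst hbx
            rw [Sym2.eq_swap (a := y)]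
            exact two_path T hT hc ha hb.symm (by rintro rfl; exact hne Sym2.eq_swap)
          · exact three_path T hT hc h ha hb hay hbx
      intro e he f hf hef
      simp only [Finset.coe_union, Set.mem_union, Finset.mem_coe, mem_inc] at he hf
      by_contra hne
      rcases he with ⟨a, ha, rfl⟩ | ⟨a, ha, rfl⟩ <;> rcases hf with ⟨b, hb, rfl⟩ | ⟨b, hb, rfl⟩
      · exact two_path T hT hc ha hb (by rintro rfl; exact hne rfl) hef
      · exact mixed a b ha hb hne hef
      · exact mixed b a hb ha (Ne.symm hne) hef.symm
      · exact two_path T hT hc ha hb (by rintro rfl; exact hne rfl) hef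
  rw [Finset.card_range] at this
  omega

theorem upper {V : Type*} [Fintype V] [DecidableEq V] (T : SimpleGraph V) [DecidableRel T.Adj]
    (hT : T.IsTree) (K : ℕ) (hK : ∀ x y, T.Adj x y → T.degree x + T.degree y - 1 ≤ K) :
    ∃ c : Sym2 V → ℕ, T.IsPCColoring 2 K c := by
  obtain ⟨r⟩ := hT.connected.nonempty
  let d : V → ℕ := T.dist r
  have hd : ∀ a b, T.Adj a b → d a = d b + 1 ∨ d b = d a + 1 := fun a b h => by
    have := hT.dist_eq_dist_add_one_of_adj r h
    simp only [d]; omega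
  have hu : ∀ a b b', T.Adj a b → T.Adj a b' → d a = d b + 1 → d a = d b' + 1 → b = b' :=
    fun a b b' h h' => parent_unique T hT r h h'
  have h0 : ∀ a, d a = 0 → a = r := fun a h => ((hT.connected.dist_eq_zero_iff).1 h).symm
  have hpar : ∀ a, a ≠ r → ∃ b, T.Adj a b ∧ d a = d b + 1 := by
    intro a ha
    obtain ⟨p, hp⟩ := hT.connected.exists_walk_length_eq_dist a r
    cases p with
    | nil => exact absurd rfl ha
    | cons h q =>
      rename_i b
      refine ⟨b, h, ?_⟩
      have h1 := hd _ _ h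
      have h2 := dist_le q
      rw [Walk.length_cons] at hp
      have h3 : T.dist b r = d b := T.dist_comm
      have h4 : T.dist a r = d a := T.dist_comm
      omega
  let rank : Sym2 V → ℕ := Sym2.lift ⟨fun a b => d a + d b, fun a b => add_comm _ _⟩
  have hrank : ∀ a b, rank s(a, b) = d a + d b := fun a b => rfl
  let N : V → V → Finset (Sym2 V) := fun x y => T.incidenceFinset x ∪ T.incidenceFinset y
  let R : Sym2 V → Sym2 V → Prop := fun e f => ∃ x y, T.Adj x y ∧ e ∈ N x y ∧ f ∈ N x y
  have orient : ∀ e ∈ T.edgeFinset, ∃ p v, T.Adj p v ∧ d v = d p + 1 ∧ e = s(p, v) := by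
    intro e he
    induction e with | _ a b
    have hab : T.Adj a b := by simpa using he
    rcases hd a b hab with h | h
    · exact ⟨b, a, hab.symm, h, Sym2.eq_swap⟩
    · exact ⟨a, b, hab, h, rfl⟩
  have memN : ∀ x y q w, T.Adj q w → (s(q, w) ∈ N x y ↔ (x = q ∨ x = w) ∨ (y = q ∨ y = w)) := by
    intro x y q w h
    simp only [N, Finset.mem_union, mem_incidenceFinset, mk'_mem_incidenceSet_iff]
    tauto
  obtain ⟨c, hc1, hc2⟩ := greedy_aux T.edgeFinset R
    (fun a b ⟨x, y, h, h1, h2⟩ => ⟨x, y, h, h2, h1⟩) rank K (by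
      intro e he
      obtain ⟨p, v, hpv, hdv, rfl⟩ := orient e he
      obtain ⟨g, hpg, hg⟩ : ∃ g, T.Adj p g ∧ (g = v ∧ p = r ∨ d p = d g + 1) := by
        by_cases hpr : p = r
        · exact ⟨v, hpv, Or.inl ⟨rfl, hpr⟩⟩
        · obtain ⟨g, h1, h2⟩ := hpar p hpr
          exact ⟨g, h1, Or.inr h2⟩
      have heN : s(p, v) ∈ N p g := (memN _ _ _ _ hpv).2 (by simp)
      refine ⟨(N p g).erase s(p, v), ?_, ?_⟩
      · rw [Finset.card_erase_of_mem heN]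
        have h1 := card_nb T hpg
        have h2 := hK p g hpg
        have h3 : 0 < (N p g).card := Finset.card_pos.2 ⟨_, heN⟩
        simp only [N] at *
        omega
      · intro f hf hne hR hrk
        obtain ⟨q, w, hqw, hdw, rfl⟩ := orient f hf
        refine Finset.mem_erase.2 ⟨hne, ?_⟩
        rw [memN _ _ _ _ hqw]
        obtain ⟨x, y, hxy, hx, hy⟩ := hR
        rw [memN _ _ _ _ hpv] at hx
        rw [memN _ _ _ _ hqw] at hy
        rw [hrank, hrank] at hrk
        have hqp : d q ≤ d p := by omega
        -- connecting-edge form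
        have key : ∀ a b, (a = p ∨ a = v) → (b = q ∨ b = w) → T.Adj a b →
            (p = q ∨ p = w) ∨ (g = q ∨ g = w) := by
          intro a b ha hb hab
          rcases ha with rfl | rfl
          · rcases hd _ _ hab with h | h
            · have hgb : g = b := by
                rcases hg with ⟨_, h2⟩ | h2
                · exfalso
                  have : d r = 0 := dist_self
                  rw [h2] at h
                  omega
                · exact hu _ _ _ hpg hab h2 h
              subst hgb; exact Or.inr hb
            · rcases hb with rfl | rfl
              · omega
              · exact Or.inl (Or.inl (hu _ _ _ hab.symm hqw.symm h hdw))
          · rcases hd _ _ hab with h | h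
            · have : p = b := hu _ _ _ hpv.symm hab hdv h
              subst this; exact Or.inl hb
            · rcases hb with rfl | rfl <;> omega
        have key2 : ∀ a, (a = p ∨ a = v) → (a = q ∨ a = w) →
            (p = q ∨ p = w) ∨ (g = q ∨ g = w) := by
          rintro a (rfl | rfl) hb
          · exact Or.inl hb
          · rcases hb with rfl | rfl
            · omega
            · exact Or.inl (Or.inl (hu _ _ _ hpv.symm hqw.symm hdv hdw))
        rcases hx with hx | hx <;> rcases hy with hy | hy
        · exact key2 x hx hy
        · exact key x y hx hy hxy
        · exact key y x hx hy hxy.symm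
        · exact key2 y hx hy)
  refine ⟨c, fun e he => hc1 e (by simpa using he), fun u v huv => ?_⟩
  obtain ⟨p, hp, -⟩ := hT.existsUnique_path u v
  refine ⟨p, hp, ?_⟩
  intro i j hi hj hij hij2
  have hli : i < p.length := by simpa using hi
  have hlj : j < p.length := by simpa using hj
  have ai := p.adj_getVert_succ hli
  have aj := p.adj_getVert_succ hlj
  apply hc2
  · simpa using p.edges_subset_edgeSet (List.getElem_mem hi)
  · simpa using p.edges_subset_edgeSet (List.getElem_mem hj)
  · intro h
    exact hij.ne ((hp.isTrail.edges_nodup.getElem_inj_iff).1 h)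
  · have ai1 := p.adj_getVert_succ (i := i + 1) (by omega)
    refine ⟨_, _, ai1, ?_, ?_⟩
    · rw [Walk.getElem_edges, memN _ _ _ _ ai]; simp
    · rw [Walk.getElem_edges, memN _ _ _ _ aj]
      obtain rfl | rfl : j = i + 1 ∨ j = i + 1 + 1 := by omega
      · simp
      · simp

/-- If `T` is a nontrivial tree, then `pc_{1,2}(T) = σ'₂(T) - 1`. -/
theorem pc_tree {V : Type*} [Fintype V] (T : SimpleGraph V) [DecidableRel T.Adj]
    (hT : T.IsTree) (hV : Nontrivial V) :
    T.pc 2 = T.sigmaTwo - 1 := by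
  classical
  have hbdd : BddAbove {d | ∃ x y : V, T.Adj x y ∧ d = T.degree x + T.degree y} := by
    refine ⟨Fintype.card V + Fintype.card V, ?_⟩
    rintro d ⟨x, y, -, rfl⟩
    exact add_le_add (T.degree_lt_card_verts x).le (T.degree_lt_card_verts y).le
  have hne : {d | ∃ x y : V, T.Adj x y ∧ d = T.degree x + T.degree y}.Nonempty := by
    obtain ⟨x⟩ := hT.connected.nonempty
    obtain ⟨y, hy⟩ := hT.connected.preconnected.exists_adj_of_nontrivial x
    exact ⟨_, x, y, hy, rfl⟩
  have hmem := Nat.sSup_mem hne hbdd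
  have hup : ∃ c : Sym2 V → ℕ, T.IsPCColoring 2 (T.sigmaTwo - 1) c := by
    apply upper T hT
    intro x y h
    exact Nat.sub_le_sub_right (le_csSup hbdd ⟨x, y, h, rfl⟩) 1
  apply le_antisymm
  · exact Nat.sInf_le hup
  · have hne2 : {k | ∃ c : Sym2 V → ℕ, T.IsPCColoring 2 k c}.Nonempty := ⟨_, hup⟩
    apply le_csInf hne2
    rintro k ⟨c, hc⟩
    obtain ⟨x, y, h, hxy⟩ := hmem
    have := lower T hT hc h
    unfold SimpleGraph.sigmaTwo
    omega
end

section
/- Let ℓ ≥ 2 be an integer and let 1 ≤ m ≤ n. Then the complete bipartite graph K_{m,n} satisfies: pc_{1,ℓ}(K_{m,n}) = n if m = 1; pc_{1,ℓ}(K_{m,n}) = 2 if m ≥ 2 and m ≤ n ≤ 2^m; pc_{1,ℓ}(K_{m,n}) = 3 if either ℓ = 2, m ≥ 2 and n > 2^m, or ℓ ≥ 3, m ≥ 2 and 2^m < n ≤ 3^m; and pc_{1,ℓ}(K_{m,n}) = 4 if ℓ ≥ 3, m ≥ 2 and n > 3^m. -/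
open SimpleGraph

def colF {m n : ℕ} (f : Fin n → Fin m → ℕ) : (Fin m ⊕ Fin n) → (Fin m ⊕ Fin n) → ℕ
  | .inl a, .inr b => f b a
  | .inr b, .inl a => f b a
  | _, _ => 0

def col {m n : ℕ} (f : Fin n → Fin m → ℕ) : Sym2 (Fin m ⊕ Fin n) → ℕ :=
  Sym2.lift ⟨colF f, by rintro (a | a) (b | b) <;> rfl⟩

lemma upper_s2 {m n ℓ k : ℕ} (f : Fin n → Fin m → ℕ) (hk : ∀ b a, f b a < k)
    (hA : ∀ a a', a ≠ a' → ∃ b, f b a ≠ f b a')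
    (hB : ∀ b b', b ≠ b' → (∃ a, f b a ≠ f b' a) ∨ ∃ a a' b'', a ≠ a' ∧ b'' ≠ b ∧ b'' ≠ b' ∧
      f b a ≠ f b'' a ∧ f b'' a ≠ f b'' a' ∧ f b'' a' ≠ f b' a' ∧ f b a ≠ f b'' a' ∧
      f b'' a ≠ f b' a' ∧ (f b a ≠ f b' a' ∨ ℓ ≤ 2)) :
    ∃ c, (completeBipartiteGraph (Fin m) (Fin n)).IsPCColoring ℓ k c := by
  have hadj : ∀ a b, (completeBipartiteGraph (Fin m) (Fin n)).Adj (.inl a) (.inr b) := by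
    intro a b; simp
  have hadj' : ∀ a b, (completeBipartiteGraph (Fin m) (Fin n)).Adj (.inr b) (.inl a) := by
    intro a b; simp
  refine ⟨col f, ?_, ?_⟩
  · intro e
    induction e using Sym2.ind with
    | _ x y =>
      rcases x with a | b <;> rcases y with a' | b' <;> simp [col, colF, hk]
  · rintro (a | b) (a' | b') hne
    · have hne' : a ≠ a' := fun h => hne (by rw [h])
      obtain ⟨b, hb⟩ := hA a a' hne'
      refine ⟨.cons (hadj a b) (.cons (hadj' a' b) .nil), ?_, ?_⟩
      · simp [hne']
      · intro i j hi hj hij _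
        simp at hi hj
        obtain ⟨rfl, rfl⟩ : i = 0 ∧ j = 1 := by omega
        simpa [col, colF] using hb
    · refine ⟨.cons (hadj a b') .nil, by simp, ?_⟩
      intro i j hi hj hij _
      simp at hi hj
      omega
    · refine ⟨.cons (hadj' a' b) .nil, by simp, ?_⟩
      intro i j hi hj hij _
      simp at hi hj
      omega
    · have hne' : b ≠ b' := fun h => hne (by rw [h])
      rcases hB b b' hne' with ⟨a, ha⟩ | ⟨a, a', b'', h1, h2, h3, h4, h5, h6, h7, h8, h9⟩
      · refine ⟨.cons (hadj' a b) (.cons (hadj a b') .nil), ?_, ?_⟩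
        · simp [hne']
        · intro i j hi hj hij _
          simp at hi hj
          obtain ⟨rfl, rfl⟩ : i = 0 ∧ j = 1 := by omega
          simpa [col, colF] using ha
      · refine ⟨.cons (hadj' a b) (.cons (hadj a b'') (.cons (hadj' a' b'')
          (.cons (hadj a' b') .nil))), ?_, ?_⟩
        · simp [hne', h1, h2.symm, h3]
        · intro i j hi hj hij hl
          simp at hi hj
          have : (i = 0 ∧ j = 1) ∨ (i = 0 ∧ j = 2) ∨ (i = 0 ∧ j = 3) ∨ (i = 1 ∧ j = 2) ∨
            (i = 1 ∧ j = 3) ∨ (i = 2 ∧ j = 3) := by omega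
          rcases this with ⟨rfl, rfl⟩ | ⟨rfl, rfl⟩ | ⟨rfl, rfl⟩ | ⟨rfl, rfl⟩ | ⟨rfl, rfl⟩ | ⟨rfl, rfl⟩
          · simpa [col, colF] using h4
          · simpa [col, colF] using h7
          · have : f b a ≠ f b' a' := by
              rcases h9 with h | h
              · exact h
              · omega
            simpa [col, colF] using this
          · simpa [col, colF] using h5
          · simpa [col, colF] using h8
          · simpa [col, colF] using h6

lemma short {m n ℓ : ℕ} (c : Sym2 (Fin m ⊕ Fin n) → ℕ) (hl : 1 ≤ ℓ) (b b' : Fin n) (hb : b ≠ b')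
    (p : (completeBipartiteGraph (Fin m) (Fin n)).Walk (.inr b) (.inr b'))
    (hp : p.IsDistProper ℓ c) (hlen : p.length ≤ 3) :
    ∃ a : Fin m, c s(.inl a, .inr b) ≠ c s(.inl a, .inr b') := by
  cases p with
  | nil => exact absurd rfl hb
  | @cons _ x _ h q =>
    rcases x with a | x
    · cases q with
      | @cons _ y _ h' q =>
        rcases y with y | y
        · simp at h'
        · cases q with
          | nil =>
            refine ⟨a, ?_⟩
            have := hp 0 1 (by simp) (by simp) (by omega) (by omega)
            simpa [Sym2.eq_swap] using this
          | @cons _ z _ h'' q =>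
            rcases z with z | z
            · cases q with
              | cons h3 q => simp at hlen; omega
            · simp at h''
    · simp at h

lemma lower_s2 {m n ℓ k : ℕ} (c : Sym2 (Fin m ⊕ Fin n) → ℕ) (hl : 1 ≤ ℓ)
    (hc : (completeBipartiteGraph (Fin m) (Fin n)).IsPCColoring ℓ k c)
    (H : ∀ b b' : Fin n, ∀ p : (completeBipartiteGraph (Fin m) (Fin n)).Walk (.inr b) (.inr b'),
      p.IsPath → p.IsDistProper ℓ c → p.length ≤ 3) : n ≤ k ^ m := by
  let g : Fin n → Fin m → Fin k := fun b a => ⟨c s(.inl a, .inr b), hc.1 _ (by simp)⟩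
  have hg : Function.Injective g := by
    intro b b' h
    by_contra hne
    obtain ⟨p, hp, hp'⟩ := hc.2 (.inr b) (.inr b') (by simpa using hne)
    obtain ⟨a, ha⟩ := short c hl b b' hne p hp' (H b b' p hp hp')
    have := congrArg Fin.val (congrFun h a)
    exact ha this
  simpa using Fintype.card_le_of_injective g hg

lemma lower1 {m n ℓ k : ℕ} (c : Sym2 (Fin m ⊕ Fin n) → ℕ) (hl : 1 ≤ ℓ) (hk : k ≤ 3) (hkl : k ≤ ℓ)
    (hc : (completeBipartiteGraph (Fin m) (Fin n)).IsPCColoring ℓ k c) : n ≤ k ^ m := by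
  apply lower_s2 c hl hc
  intro b b' p _ hp
  by_contra! hlen
  have hlen' : k + 1 ≤ p.edges.length := by rw [Walk.length_edges]; omega
  let g : Fin (k+1) → Fin k := fun i =>
    ⟨c (p.edges[i.1]'(by omega)), hc.1 _ (p.edges_subset_edgeSet (List.getElem_mem _))⟩
  have hg : Function.Injective g := by
    intro i j h
    have h' := congrArg Fin.val h
    simp only [g] at h'
    by_contra hne
    rcases lt_or_gt_of_ne (fun h => hne (Fin.ext h) : i.1 ≠ j.1) with hh | hh
    · exact hp i j (by omega) (by omega) hh (by omega) h'
    · exact hp j i (by omega) (by omega) hh (by omega) h'.symm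
  have := Fintype.card_le_of_injective g hg
  simp at this

lemma lower2 {n ℓ k : ℕ} (c : Sym2 (Fin 1 ⊕ Fin n) → ℕ) (hl : 1 ≤ ℓ)
    (hc : (completeBipartiteGraph (Fin 1) (Fin n)).IsPCColoring ℓ k c) : n ≤ k := by
  have := lower_s2 c hl hc ?_
  · simpa using this
  intro b b' p hp _
  cases p with
  | nil => simp
  | @cons _ x _ h q =>
    rcases x with a | x
    · cases q with
      | @cons _ y _ h' q =>
        rcases y with y | y
        · simp at h'
        · cases q with
          | nil => simp
          | @cons _ z _ h'' q =>
            rcases z with z | z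
            · have : a = z := Subsingleton.elim _ _
              subst this
              simp [Walk.isPath_def] at hp
            · simp at h''
    · simp at h

lemma pc_eq {m n ℓ K : ℕ} 
    (h1 : ∃ c, (completeBipartiteGraph (Fin m) (Fin n)).IsPCColoring ℓ K c)
    (h2 : ∀ k c, (completeBipartiteGraph (Fin m) (Fin n)).IsPCColoring ℓ k c → K ≤ k) :
    (completeBipartiteGraph (Fin m) (Fin n)).pc ℓ = K := by
  apply le_antisymm
  · exact Nat.sInf_le h1
  · apply le_csInf ⟨K, h1⟩
    rintro k ⟨c, hc⟩
    exact h2 k c hc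

lemma upper_inj {m n ℓ k : ℕ} (hk : 2 ≤ k) (hmn : m ≤ n) (hn : n ≤ k ^ m) :
    ∃ c, (completeBipartiteGraph (Fin m) (Fin n)).IsPCColoring ℓ k c := by
  let e : Fin m → (Fin m → Fin k) := fun i j => if i = j then ⟨1, by omega⟩ else ⟨0, by omega⟩
  obtain ⟨S, hS, _, hc⟩ := Finset.exists_subsuperset_card_eq (n := n)
    (Finset.subset_univ (Finset.univ.image e))
    (Finset.card_image_le.trans (by simpa using hmn)) (by simpa using hn)
  let g : Fin n ≃ S := (S.equivFinOfCardEq hc).symm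
  refine upper_s2 (fun b a => ((g b).1 a).1) (fun b a => (((g b).1 a)).2) ?_ ?_
  · intro a a' hne
    refine ⟨g.symm ⟨e a, hS (by simp)⟩, ?_⟩
    simp [e, hne]
  · intro b b' hne
    left
    by_contra! h
    apply hne
    apply g.injective
    apply Subtype.ext
    funext a
    exact Fin.ext (h a)

lemma upper_many {m n ℓ k p q y z u : ℕ} (hm : 2 ≤ m) (hn : m + 1 ≤ n)
    (hk : 0 < k ∧ p < k ∧ q < k ∧ y < k ∧ z < k ∧ u < k)
    (hu : u ≠ 0) (hup : p ≠ u) (huq : q ≠ u) (hz : z ≠ 0) (hzu : z ≠ u) (hy : y ≠ 0)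
    (hpy : p ≠ y) (hyz : y ≠ z) (hzq : z ≠ q) (hpz : p ≠ z) (hyq : y ≠ q)
    (hpq : p ≠ q ∨ ℓ ≤ 2) :
    ∃ c, (completeBipartiteGraph (Fin m) (Fin n)).IsPCColoring ℓ k c := by
  let f : Fin n → Fin m → ℕ := fun b a =>
    if b.1 < m then (if a.1 = b.1 then u else 0)
    else if b.1 = m then (if a.1 = 0 then y else if a.1 = 1 then z else 0)
    else (if a.1 = 0 then p else if a.1 = 1 then q else 0)
  refine upper_s2 f ?_ ?_ ?_
  · intro b a
    simp only [f]
    split_ifs <;> omega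
  · intro a a' hne
    refine ⟨⟨a.1, by omega⟩, ?_⟩
    have : a'.1 ≠ a.1 := fun h => hne (Fin.ext h.symm)
    simp [f, this, hu]
  · intro b b' hne
    have hne' : b.1 ≠ b'.1 := fun h => hne (Fin.ext h)
    by_cases hz' : m < b.1 ∧ m < b'.1
    · right
      refine ⟨⟨0, by omega⟩, ⟨1, by omega⟩, ⟨m, by omega⟩, by simp, ?_, ?_, ?_⟩
      · intro h; have := congrArg Fin.val h; simp at this; omega
      · intro h; have := congrArg Fin.val h; simp at this; omega
      · have e1 : ¬ b.1 < m := by omega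
        have e2 : ¬ b'.1 < m := by omega
        have e3 : ¬ b.1 = m := by omega
        have e4 : ¬ b'.1 = m := by omega
        simp only [f, e1, e2, e3, e4, if_false, lt_irrefl, if_true, one_ne_zero]
        exact ⟨hpy, hyz, hzq, hpz, hyq, hpq⟩
    · left
      by_contra! h
      have g0 := h ⟨0, by omega⟩
      have g1 := h ⟨1, by omega⟩
      have gb : ∀ hb : b.1 < m, f b ⟨b.1, hb⟩ = f b' ⟨b.1, hb⟩ := fun hb => h _
      have gb' : ∀ hb : b'.1 < m, f b ⟨b'.1, hb⟩ = f b' ⟨b'.1, hb⟩ := fun hb => h _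
      simp only [f] at g0 g1 gb gb'
      clear h
      clear_value f
      rcases lt_trichotomy b.1 m with h1 | h1 | h1 <;>
      rcases lt_trichotomy b'.1 m with h2 | h2 | h2 <;>
      grind

/-- The `(1,ℓ)`-proper connection number of the complete bipartite graph `K_{m,n}`
for `ℓ ≥ 2` and `1 ≤ m ≤ n`. -/
theorem pc_completeBipartite (ℓ m n : ℕ) (hℓ : 2 ≤ ℓ) (hm : 1 ≤ m) (hmn : m ≤ n) :
    (m = 1 → (completeBipartiteGraph (Fin m) (Fin n)).pc ℓ = n) ∧
    (2 ≤ m → n ≤ 2 ^ m → (completeBipartiteGraph (Fin m) (Fin n)).pc ℓ = 2) ∧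
    ((ℓ = 2 ∧ 2 ≤ m ∧ 2 ^ m < n) ∨ (3 ≤ ℓ ∧ 2 ≤ m ∧ 2 ^ m < n ∧ n ≤ 3 ^ m) →
      (completeBipartiteGraph (Fin m) (Fin n)).pc ℓ = 3) ∧
    (3 ≤ ℓ → 2 ≤ m → 3 ^ m < n → (completeBipartiteGraph (Fin m) (Fin n)).pc ℓ = 4) := by
  have low : ∀ K, K ≤ 3 → K ≤ ℓ → K ^ m < n → ∀ k c,
      (completeBipartiteGraph (Fin m) (Fin n)).IsPCColoring ℓ k c → K + 1 ≤ k := by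
    intro K hK hKl hn k c hc
    by_contra! h
    have h1 := lower1 c (by omega) (by omega) (by omega) hc
    have h2 := Nat.pow_le_pow_left (show k ≤ K by omega) m
    omega
  refine ⟨?_, ?_, ?_, ?_⟩
  · rintro rfl
    apply pc_eq
    · refine upper_s2 (fun b _ => b.1) (fun b _ => b.2) ?_ ?_
      · intro a a' h; exact absurd (Subsingleton.elim _ _) h
      · intro b b' h
        left
        exact ⟨0, fun h' => h (Fin.ext h')⟩
    · intro k c hc
      exact lower2 c (by omega) hc
  · intro h2 hn
    apply pc_eq (upper_inj le_rfl hmn hn)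
    exact low 1 (by omega) (by omega) (by rw [one_pow]; omega)
  · intro h
    have hn : 2 ^ m < n := by tauto
    have h2 : 2 ≤ m := by tauto
    apply pc_eq _ (low 2 (by omega) (by omega) hn)
    rcases h with ⟨rfl, _⟩ | ⟨_, _, _, h⟩
    · have := Nat.lt_two_pow_self (n := m)
      exact upper_many (p := 0) (q := 0) (y := 1) (z := 2) (u := 1) h2 (by omega) (by omega)
        (by omega) (by omega) (by omega) (by omega) (by omega) (by omega) (by omega) (by omega)
        (by omega) (by omega) (by omega) (by omega)
    · exact upper_inj (by omega) hmn h
  · intro hl h2 hn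
    apply pc_eq _ (low 3 (by omega) (by omega) hn)
    have := Nat.lt_pow_self (n := m) (a := 3) (by omega)
    exact upper_many (p := 0) (q := 1) (y := 2) (z := 3) (u := 2) h2 (by omega) (by omega)
        (by omega) (by omega) (by omega) (by omega) (by omega) (by omega) (by omega) (by omega)
        (by omega) (by omega) (by omega) (by omega)
end

section
/- If a graph G is 2-connected, then pc_{1,2}(G) ≤ 5. -/
open SimpleGraph

/-- A graph is 2-connected if it has at least 3 vertices and remains connected
after the deletion of any single vertex. -/
def SimpleGraph.TwoConnected {V : Type*} (G : SimpleGraph V) : Prop :=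
  3 ≤ Nat.card V ∧ ∀ v : V, (G.induce ({v}ᶜ : Set V)).Connected

namespace PC

def P3 : List ℕ → Prop
  | [] => True
  | x :: l => x ∉ l.take 2 ∧ P3 l

theorem P3_suffix {l m : List ℕ} (h : P3 (l ++ m)) : P3 m := by
  induction l with
  | nil => exact h
  | cons x l ih => exact ih h.2

theorem P3_glue (l : List ℕ) (x y : ℕ) (m : List ℕ) (h : P3 (l ++ [x, y]))
    (h' : P3 (x :: y :: m)) : P3 (l ++ x :: y :: m) := by
  induction l with
  | nil => exact h'
  | cons z l ih =>
    refine ⟨?_, ih h.2⟩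
    have := h.1
    rcases l with _ | ⟨w, _ | ⟨v, l⟩⟩ <;> simpa using this

theorem P3_iff (l : List ℕ) : P3 l ↔ ∀ (i j : ℕ) (hi : i < l.length) (hj : j < l.length),
    i < j → j ≤ i + 2 → l[i] ≠ l[j] := by
  induction l with
  | nil => simp [P3]
  | cons x l ih =>
    simp only [P3, ih]
    constructor
    · rintro ⟨h1, h2⟩ i j hi hj hij hj2
      rcases j with _ | j
      · omega
      rcases i with _ | i
      · intro he
        apply h1
        rw [List.mem_take_iff_getElem]
        simp at hj
        exact ⟨j, by omega, by simpa using he.symm⟩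
      · simpa using h2 i j (by simpa using hi) (by simpa using hj) (by omega) (by omega)
    · intro h
      refine ⟨?_, ?_⟩
      · intro hx
        rw [List.mem_take_iff_getElem] at hx
        obtain ⟨j, hj, he⟩ := hx
        exact h 0 (j+1) (by simp) (by simp; omega) (by omega) (by omega) (by simpa using he.symm)
      · intro i j hi hj hij hj2
        exact h (i+1) (j+1) (by simpa using hi) (by simpa using hj) (by omega) (by omega)

theorem P3_reverse {l : List ℕ} (h : P3 l) : P3 l.reverse := by
  rw [P3_iff] at h ⊢
  intro i j hi hj hij hj2
  simp at hi hj
  rw [List.getElem_reverse, List.getElem_reverse]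
  exact (h _ _ (by omega) (by omega) (by omega) (by omega)).symm

theorem avoid (a b c d : ℕ) : ∃ w < 5, w ≠ a ∧ w ≠ b ∧ w ≠ c ∧ w ≠ d := by
  by_contra hcon
  push Not at hcon
  have h0 := hcon 0
  have h1 := hcon 1
  have h2 := hcon 2
  have h3 := hcon 3
  have h4 := hcon 4
  omega

theorem avoidU (a b : ℕ) (U : List ℕ) : ∃ w < 5, w ≠ a ∧ w ≠ b ∧ w ∉ U.take 2 := by
  rcases U with _ | ⟨p, _ | ⟨q, U⟩⟩
  · obtain ⟨w, h⟩ := avoid a b a b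
    exact ⟨w, by simp; tauto⟩
  · obtain ⟨w, h⟩ := avoid a b p p
    exact ⟨w, by simp; tauto⟩
  · obtain ⟨w, h⟩ := avoid a b p q
    exact ⟨w, by simp; tauto⟩

theorem ext_col (U : List ℕ) (hU : P3 U) (n : ℕ) : ∀ x y : ℕ, x ≠ y →
    ∃ h : List ℕ, h.length = n + 1 ∧ (∀ z ∈ h, z < 5) ∧ P3 (x :: y :: h) ∧ P3 (h ++ U) := by
  induction n with
  | zero =>
    intro x y hxy
    obtain ⟨w, h5, hx, hy, hw⟩ := avoidU x y U
    exact ⟨[w], rfl, by simpa using h5, by simp [P3]; tauto, hw, hU⟩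
  | succ n ih =>
    intro x y hxy
    obtain ⟨w, h5, hx, hy, hw, -⟩ := avoid x y (U.headD x) x
    obtain ⟨h, hl, hh5, hp, hu⟩ := ih y w hy.symm
    refine ⟨w :: h, by simp [hl], by simpa using ⟨h5, hh5⟩, ⟨?_, hp⟩, ?_, hu⟩
    · simp; tauto
    · have := hp.2.1
      rcases h with _ | ⟨a, _ | ⟨b, h⟩⟩
      · simp at hl
      · rcases U with _ | ⟨u, U⟩ <;> simp_all
      · simpa using this

theorem color_ear (U : List ℕ) (hU : P3 U) (D : List ℕ) (hD : D ≠ []) (e : ℕ) (he : P3 (e :: D))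
    (k : ℕ) : ∃ h : List ℕ, h.length = k + 1 ∧ (∀ z ∈ h, z < 5) ∧ P3 (h.reverse ++ e :: D) ∧
      P3 (h ++ U) := by
  rcases D with _ | ⟨d, D⟩
  · exact absurd rfl hD
  have hne : d ≠ e := by
    have := he.1
    simp at this
    tauto
  obtain ⟨h, h1, h2, h3, h4⟩ := ext_col U hU k d e hne
  refine ⟨h, h1, h2, P3_glue _ _ _ _ ?_ he, h4⟩
  simpa using P3_reverse h3

variable {V : Type*}

def eds : List V → List (Sym2 V)
  | [] => []
  | [_] => []
  | x :: y :: l => s(x, y) :: eds (y :: l)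

theorem eds_append (l : List V) (x : V) (m : List V) :
    eds (l ++ x :: m) = eds (l ++ [x]) ++ eds (x :: m) := by
  induction l with
  | nil => simp [eds]
  | cons y l ih =>
    rcases l with _ | ⟨z, l⟩
    · simp [eds]
    · simpa [eds] using ih

theorem eds_reverse (l : List V) : eds l.reverse = (eds l).reverse := by
  induction l with
  | nil => simp [eds]
  | cons y l ih =>
    rcases l with _ | ⟨z, l⟩
    · simp [eds]
    · have := eds_append l.reverse z [y]
      simp only [List.reverse_cons, List.append_assoc, List.cons_append, List.nil_append] at ih ⊢
      rw [this, ih]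
      simp [eds, Sym2.eq_swap]

theorem length_eds (x : V) (l : List V) : (eds (x :: l)).length = l.length := by
  induction l generalizing x with
  | nil => simp [eds]
  | cons y l ih => simp [eds, ih]

theorem mem_of_eds {l : List V} {e : Sym2 V} (he : e ∈ eds l) {x : V} (hx : x ∈ e) : x ∈ l := by
  induction l with
  | nil => simp [eds] at he
  | cons y l ih =>
    rcases l with _ | ⟨z, l⟩
    · simp [eds] at he
    · simp only [eds, List.mem_cons] at he
      rcases he with rfl | he
      · simp at hx; rcases hx with rfl | rfl <;> simp
      · exact List.mem_cons_of_mem _ (ih he)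

theorem eds_nodup {l : List V} (h : l.Nodup) : (eds l).Nodup := by
  induction l with
  | nil => simp [eds]
  | cons y l ih =>
    rcases l with _ | ⟨z, l⟩
    · simp [eds]
    · simp only [eds, List.nodup_cons] at h ⊢
      refine ⟨fun hm => h.1 (mem_of_eds hm (by simp)), ih (by simpa using h.2)⟩

theorem eds_ear_nodup {a b : V} {p : List V} (hp : p ≠ []) (hn : p.Nodup) (ha : a ∉ p) (hb : b ∉ p)
    (hab : a ≠ b ∨ 2 ≤ p.length) : (eds (a :: (p ++ [b]))).Nodup := by
  rcases p with _ | ⟨x, p⟩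
  · exact absurd rfl hp
  have hn' : (x :: (p ++ [b])).Nodup := by
    have : ((x :: p) ++ [b]).Nodup := by
      rw [List.nodup_append]
      refine ⟨hn, by simp, ?_⟩
      intro y hy z hz
      simp at hz; subst hz
      rintro rfl; exact hb hy
    simpa using this
  simp only [List.cons_append, eds, List.nodup_cons]
  refine ⟨fun hm => ?_, eds_nodup hn'⟩
  have h1 : a = b := by
    have := mem_of_eds hm (x := a) (by simp)
    simp at this ha
    tauto
  subst h1
  rcases p with _ | ⟨y, p⟩
  · simp at hab
  · simp only [List.cons_append, eds, List.mem_cons] at hm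
    rcases hm with hm | hm
    · simp at hm ha; tauto
    · have := mem_of_eds hm (x := x) (by simp)
      rw [List.nodup_cons] at hn'
      exact hn'.1 (by simpa using this)

theorem eds_ear_mem {a b : V} {p : List V} (hp : p ≠ []) {e : Sym2 V}
    (he : e ∈ eds (a :: (p ++ [b]))) : ∃ x ∈ p, x ∈ e := by
  induction p generalizing a with
  | nil => exact absurd rfl hp
  | cons x p ih =>
    simp only [List.cons_append, eds, List.mem_cons] at he
    rcases he with rfl | he
    · exact ⟨x, by simp⟩
    · rcases p with _ | ⟨y, p⟩
      · simp [eds] at he; subst he; exact ⟨x, by simp⟩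
      · obtain ⟨z, hz, hze⟩ := ih (by simp) he
        exact ⟨z, List.mem_cons_of_mem _ hz, hze⟩

theorem exists_col {E : Type*} (c : E → ℕ) (es : List E) (g : List ℕ) (hn : es.Nodup)
    (hl : es.length = g.length) : ∃ c' : E → ℕ, es.map c' = g ∧ ∀ e, e ∉ es → c' e = c e := by
  classical
  induction es generalizing g with
  | nil => exact ⟨c, by simpa using hl.symm, by simp⟩
  | cons x es ih =>
    rcases g with _ | ⟨y, g⟩
    · simp at hl
    rw [List.nodup_cons] at hn
    obtain ⟨c', h1, h2⟩ := ih g hn.2 (by simpa using hl)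
    refine ⟨Function.update c' x y, ?_, ?_⟩
    · simp only [List.map_cons, Function.update_self, List.cons.injEq, true_and]
      rw [← h1]
      apply List.map_congr_left
      intro e he
      rw [Function.update_of_ne]
      rintro rfl; exact hn.1 he
    · intro e he
      simp at he
      rw [Function.update_of_ne he.1, h2 e he.2]

def cl (c : Sym2 V → ℕ) (l : List V) : List ℕ := (eds l).map c

structure PO (G : SimpleGraph V) (r : V) (c : Sym2 V → ℕ) (k f : ℕ) (T : V → Prop) (v : V)
    (l : List V) : Prop where
  chain : (v :: l).IsChain G.Adj
  nodup : (v :: l).Nodup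
  mem : ∀ x ∈ v :: l, T x
  last : ∃ m, v :: l = m ++ [r]
  prop : P3 (cl c (v :: l) ++ [k])
  fin : (v = r ∧ l = []) ∨ ∃ t, cl c (v :: l) = t ++ [f]

theorem PO.congr {G : SimpleGraph V} {r : V} {c c' : Sym2 V → ℕ} {k f : ℕ} {T T' : V → Prop} {v : V}
    {l : List V} (h : PO G r c k f T v l) (hT : ∀ x, T x → T' x)
    (hc : ∀ e, (∀ x ∈ e, T x) → c' e = c e) : PO G r c' k f T' v l := by
  have he : cl c' (v :: l) = cl c (v :: l) := by
    apply List.map_congr_left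
    intro e he
    exact hc e fun x hx => h.mem x (mem_of_eds he hx)
  exact ⟨h.chain, h.nodup, fun x hx => hT x (h.mem x hx), h.last, he ▸ h.prop, he ▸ h.fin⟩

theorem PO.ext {G : SimpleGraph V} {r : V} {c : Sym2 V → ℕ} {k f : ℕ} {T T' : V → Prop} {a : V}
    {la l1 l2 : List V} {x : V} (h : PO G r c k f T a la)
    (hch : (l1 ++ x :: l2 ++ [a]).IsChain G.Adj) (hn : (l1 ++ x :: l2).Nodup)
    (hd : ∀ y ∈ l1 ++ x :: l2, ¬ T y)
    (hp : P3 (cl c (l1 ++ x :: l2 ++ [a]) ++ (cl c (a :: la) ++ [k])))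
    (hf : a = r → ∃ t, cl c (l1 ++ x :: l2 ++ [a]) = t ++ [f])
    (hT : ∀ x, T x → T' x) (hT' : ∀ y ∈ x :: l2, T' y) :
    PO G r c k f T' x (l2 ++ a :: la) := by
  have e1 : l1 ++ x :: l2 ++ [a] = l1 ++ x :: (l2 ++ [a]) := by simp
  have e2 : cl c (x :: (l2 ++ a :: la)) = cl c (x :: (l2 ++ [a])) ++ cl c (a :: la) := by
    simp only [cl]
    rw [← List.cons_append, eds_append, List.map_append, List.cons_append]
  have e3 : cl c (l1 ++ x :: (l2 ++ [a])) = cl c (l1 ++ [x]) ++ cl c (x :: (l2 ++ [a])) := by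
    simp only [cl]
    rw [eds_append, List.map_append]
  refine ⟨?_, ?_, ?_, ?_, ?_, ?_⟩
  · have h1 := h.chain
    rw [e1] at hch
    have h2 : (x :: l2 ++ [a]).IsChain G.Adj := hch.right_of_append
    have h3 := h2.append_overlap (l₃ := la) (by simpa using h1) (by simp)
    simpa using h3
  · rw [← List.cons_append, List.nodup_append]
    refine ⟨hn.of_append_right, h.nodup, ?_⟩
    rintro y hy z hz rfl
    exact hd y (List.mem_append_right _ hy) (h.mem y hz)
  · intro y hy
    rw [← List.cons_append, List.mem_append] at hy
    rcases hy with hy | hy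
    · exact hT' y hy
    · exact hT y (h.mem y hy)
  · obtain ⟨m, hm⟩ := h.last
    exact ⟨x :: l2 ++ m, by simp [hm]⟩
  · rw [e1, e3, List.append_assoc] at hp
    rw [e2, List.append_assoc]
    exact P3_suffix hp
  · right
    rcases h.fin with ⟨rfl, rfl⟩ | ⟨t, ht⟩
    · obtain ⟨t, ht⟩ := hf rfl
      rw [e2]
      rw [e1, e3] at ht
      have hne : cl c (x :: (l2 ++ [a])) ≠ [] := by
        intro h0
        have := congrArg List.length h0
        simp [cl, length_eds] at this
      have h5 := congrArg List.getLast? ht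
      rw [List.getLast?_append_of_ne_nil _ hne] at h5
      simp only [List.getLast?_append, List.getLast?_singleton, Option.some_or] at h5
      rw [List.getLast?_eq_some_iff] at h5
      obtain ⟨ys, hys⟩ := h5
      exact ⟨ys, by rw [hys]; simp [cl, eds]⟩
    · exact ⟨cl c (x :: (l2 ++ [a])) ++ t, by rw [e2, ht]; simp⟩

structure St (G : SimpleGraph V) (r : V) (S : Set V) (c : Sym2 V → ℕ) (pos : V → ℕ) : Prop where
  hr : r ∈ S
  c5 : ∀ e, c e < 5
  pos0 : pos r = 0
  inj : ∀ u ∈ S, ∀ v ∈ S, pos u = pos v → u = v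
  down : ∀ v ∈ S, ∃ l, PO G r c 3 1 (fun x => x ∈ S ∧ pos x ≤ pos v) v l
  up : ∀ v ∈ S, ∃ l, PO G r c 1 3 (fun x => x ∈ S ∧ (x = r ∨ pos v ≤ pos x)) v l

theorem idx_lt [DecidableEq V] {l1 l2 : List V} {x y : V} (hn : (l1 ++ x :: l2).Nodup)
    (hy : y ∈ l1) : (l1 ++ x :: l2).idxOf y < (l1 ++ x :: l2).idxOf x := by
  have hx : x ∉ l1 := by
    intro hx
    exact (List.nodup_append.1 hn).2.2 x hx x (by simp) rfl
  rw [List.idxOf_append_of_mem hy, List.idxOf_append_of_notMem hx]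
  have := List.idxOf_lt_length_of_mem hy
  omega

theorem idx_le [DecidableEq V] {l1 l2 : List V} {x y : V} (hn : (l1 ++ x :: l2).Nodup)
    (hy : y ∈ x :: l2) : (l1 ++ x :: l2).idxOf x ≤ (l1 ++ x :: l2).idxOf y := by
  have h1 : ∀ z ∈ x :: l2, z ∉ l1 := by
    intro z hz hz1
    exact (List.nodup_append.1 hn).2.2 z hz1 z hz rfl
  rw [List.idxOf_append_of_notMem (h1 y hy), List.idxOf_append_of_notMem (h1 x (by simp))]
  simp

theorem step {G : SimpleGraph V} {r : V} {S : Set V} {c : Sym2 V → ℕ} {pos : V → ℕ}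
    (h : St G r S c pos) {a b : V} (ha : a ∈ S) (hb : b ∈ S) (hab : b = r ∨ pos a < pos b)
    {p : List V} (hp : p ≠ []) (hn : p.Nodup) (hd : ∀ x ∈ p, x ∉ S)
    (hch : (a :: (p ++ [b])).IsChain G.Adj) (hab' : a ≠ b ∨ 2 ≤ p.length)
    {la lb : List V} (hla : PO G r c 3 1 (fun x => x ∈ S ∧ pos x ≤ pos a) a la)
    (hlb : PO G r c 1 3 (fun x => x ∈ S ∧ (x = r ∨ pos b ≤ pos x)) b lb)
    {g : List ℕ} (hg : g.length = p.length + 1) (hg5 : ∀ z ∈ g, z < 5)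
    (hgd : P3 (g.dropLast.reverse ++ (cl c (a :: la) ++ [3])))
    (hgu : P3 (g.tail ++ (cl c (b :: lb) ++ [1])))
    (hga : a = r → ∃ t, g = 1 :: t) (hgb : b = r → ∃ t, g = t ++ [3]) :
    ∃ c' pos', St G r (S ∪ {x | x ∈ p}) c' pos' := by
  classical
  have hap : a ∉ p := fun h => hd a h ha
  have hbp : b ∉ p := fun h => hd b h hb
  obtain ⟨c', hc', hcc⟩ := exists_col c (eds (a :: (p ++ [b]))) g
    (eds_ear_nodup hp hn hap hbp hab') (by rw [length_eds, hg]; simp)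
  have hcS : ∀ e : Sym2 V, (∀ x ∈ e, x ∈ S) → c' e = c e := by
    intro e he
    apply hcc
    intro hm
    obtain ⟨x, hx, hxe⟩ := eds_ear_mem hp hm
    exact hd x hx (he x hxe)
  have hgu' : cl c' (p ++ [b]) = g.tail := by
    rw [← hc']
    rcases p with _ | ⟨x, p⟩
    · exact absurd rfl hp
    · simp [cl, eds]
  have hgd' : cl c' (p.reverse ++ [a]) = g.dropLast.reverse := by
    rw [← hc', ← List.reverse_cons, cl, eds_reverse, List.map_reverse]
    congr 1
    obtain ⟨q, y, rfl⟩ : ∃ q y, p = q ++ [y] := ⟨p.dropLast, p.getLast hp, (List.dropLast_append_getLast hp).symm⟩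
    have : a :: (q ++ [y] ++ [b]) = (a :: q) ++ y :: [b] := by simp
    rw [this, eds_append]
    simp [eds]
  set n := p.length with hnl
  let pos' : V → ℕ := fun v => if v ∈ S then (if pos v ≤ pos a then pos v else pos v + n)
    else pos a + 1 + p.idxOf v
  have posS : ∀ v ∈ S, pos' v = if pos v ≤ pos a then pos v else pos v + n := by
    intro v hv; simp [pos', hv]
  have posP : ∀ v ∈ p, pos' v = pos a + 1 + p.idxOf v ∧ p.idxOf v < n := by
    intro v hv
    refine ⟨by simp [pos', hd v hv], List.idxOf_lt_length_of_mem hv⟩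
  have mono : ∀ u ∈ S, ∀ v ∈ S, pos u ≤ pos v → pos' u ≤ pos' v := by
    intro u hu v hv huv
    rw [posS u hu, posS v hv]
    split_ifs <;> omega
  have hla' := hla.congr (c' := c') (T' := fun x => x ∈ S ∧ pos x ≤ pos a) (fun x hx => hx)
    (fun e he => hcS e fun x hx => (he x hx).1)
  have hlb' : PO G r c' 1 3 (fun x => x ∈ S ∧ (x = r ∨ pos a < pos x)) b lb := by
    have h1 := hlb.congr (c' := c') (T' := fun x => x ∈ S ∧ (x = r ∨ pos b ≤ pos x))
      (fun x hx => hx) (fun e he => hcS e fun x hx => (he x hx).1)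
    refine ⟨h1.chain, h1.nodup, ?_, h1.last, h1.prop, h1.fin⟩
    intro x hx
    have h2 := h1.mem x hx
    refine ⟨h2.1, ?_⟩
    rcases hab with hb | hb
    · left
      have h3 := h1.nodup
      obtain ⟨m, hm⟩ := h1.last
      rcases m with _ | ⟨z, m⟩
      · rw [hm] at hx; simpa using hx
      · exfalso
        simp at hm
        rw [hm.2, hb] at h3
        simp at h3
    · exact h2.2.imp id fun h3 => by omega
  have hcla : cl c' (a :: la) = cl c (a :: la) := by
    apply List.map_congr_left
    intro e he
    exact hcS e fun x hx => (hla.mem x (mem_of_eds he hx)).1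
  have hclb : cl c' (b :: lb) = cl c (b :: lb) := by
    apply List.map_congr_left
    intro e he
    exact hcS e fun x hx => (hlb.mem x (mem_of_eds he hx)).1
  refine ⟨c', pos', Or.inl h.hr, ?_, ?_, ?_, ?_, ?_⟩
  · intro e
    by_cases he : e ∈ eds (a :: (p ++ [b]))
    · apply hg5
      rw [← hc']
      exact List.mem_map_of_mem he
    · rw [hcc e he]; exact h.c5 e
  · rw [posS r h.hr, h.pos0]; simp
  · rintro u (hu | hu) v (hv | hv) huv
    · apply h.inj u hu v hv
      rw [posS u hu, posS v hv] at huv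
      split_ifs at huv <;> omega
    · have := posP v hv
      rw [posS u hu] at huv
      split_ifs at huv <;> omega
    · have := posP u hu
      rw [posS v hv] at huv
      split_ifs at huv <;> omega
    · have h1 := posP u hu
      have h2 := posP v hv
      exact (List.idxOf_inj hu).1 (by omega)
  · rintro v (hv | hv)
    · obtain ⟨l, hl⟩ := h.down v hv
      exact ⟨l, hl.congr (fun x hx => ⟨Or.inl hx.1, mono x hx.1 v hv hx.2⟩)
        (fun e he => hcS e fun x hx => (he x hx).1)⟩
    · have hv' : v ∈ p.reverse := by simpa using hv
      obtain ⟨l1, l2, hl⟩ := List.append_of_mem hv'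
      have hpe : p = l2.reverse ++ v :: l1.reverse := by
        have := congrArg List.reverse hl
        simpa using this
      refine ⟨l2 ++ a :: la, PO.ext (l1 := l1) hla' ?_ ?_ ?_ ?_ ?_ ?_ ?_⟩
      · rw [← hl, ← List.reverse_cons, List.isChain_reverse]
        have : ((a :: p) ++ [b]).IsChain G.Adj := by simpa using hch
        exact this.left_of_append.imp fun x y hxy => hxy.symm
      · rw [← hl]; exact List.nodup_reverse.2 hn
      · rw [← hl]; intro y hy hy'; exact hd y (by simpa using hy) hy'.1
      · rw [← hl, hgd', hcla]; exact hgd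
      · intro har
        obtain ⟨t, ht⟩ := hga har
        rw [← hl, hgd', ht]
        rcases t with _ | ⟨z, t⟩
        · rw [ht] at hg
          simp at hg
          exact absurd (List.length_eq_zero_iff.1 (by omega)) hp
        · exact ⟨(z :: t).dropLast.reverse, by simp⟩
      · intro x hx
        refine ⟨Or.inl hx.1, ?_⟩
        rw [posS x hx.1, if_pos hx.2]
        have := posP v hv
        omega
      · intro y hy
        have hyp : y ∈ p := by
          rw [hpe]; simp at hy ⊢; tauto
        refine ⟨Or.inr hyp, ?_⟩
        rcases List.mem_cons.1 hy with rfl | hy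
        · exact le_rfl
        · have h1 := posP v hv
          have h2 := posP y hyp
          have h3 : p.idxOf y < p.idxOf v := by
            rw [hpe] at hn ⊢
            exact idx_lt hn (by simpa using hy)
          omega
  · rintro v (hv | hv)
    · obtain ⟨l, hl⟩ := h.up v hv
      exact ⟨l, hl.congr (fun x hx => ⟨Or.inl hx.1, hx.2.imp id fun hx' => mono v hv x hx.1 hx'⟩)
        (fun e he => hcS e fun x hx => (he x hx).1)⟩
    · obtain ⟨l1, l2, hl⟩ := List.append_of_mem hv
      refine ⟨l2 ++ b :: lb, PO.ext (l1 := l1) hlb' ?_ ?_ ?_ ?_ ?_ ?_ ?_⟩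
      · rw [← hl]; exact hch.of_cons
      · rw [← hl]; exact hn
      · rw [← hl]; intro y hy hy'; exact hd y hy hy'.1
      · rw [← hl, hgu', hclb]; exact hgu
      · intro hbr
        obtain ⟨t, ht⟩ := hgb hbr
        rw [← hl, hgu', ht]
        rcases t with _ | ⟨z, t⟩
        · rw [ht] at hg
          simp at hg
          exact absurd (List.length_eq_zero_iff.1 (by omega)) hp
        · exact ⟨t, by simp⟩
      · intro x hx
        refine ⟨Or.inl hx.1, ?_⟩
        refine hx.2.imp id fun hx2 => ?_
        have := posP v hv
        rw [posS x hx.1, if_neg (by omega)]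
        omega
      · intro y hy
        have hyp : y ∈ p := by
          rw [hl]; simp at hy ⊢; tauto
        refine ⟨Or.inr hyp, Or.inr ?_⟩
        have h1 := posP v hv
        have h2 := posP y hyp
        have h3 : p.idxOf v ≤ p.idxOf y := by
          rw [hl] at hn ⊢
          exact idx_le hn hy
        omega

theorem hit (G : SimpleGraph V) (a : V) (T : Set V) {p x : ({a}ᶜ : Set V)}
    (w : (G.induce ({a}ᶜ : Set V)).Walk p x) (hw : w.IsPath) (hx : x.1 ∈ T) (hp : p.1 ∉ T) :
    ∃ l b, (p.1 :: l ++ [b]).IsChain G.Adj ∧ (p.1 :: l).Nodup ∧ (∀ y ∈ p.1 :: l, y ∉ T ∧ y ≠ a) ∧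
      b ∈ T ∧ b ≠ a ∧ ∀ y ∈ p.1 :: l, y ∈ w.support.map Subtype.val := by
  induction w with
  | nil => exact absurd hx hp
  | @cons u v x huv w ih =>
    rw [Walk.cons_isPath_iff] at hw
    have huv' : G.Adj u.1 v.1 := huv
    have hua : u.1 ≠ a := u.2
    have hva : v.1 ≠ a := v.2
    by_cases hv : v.1 ∈ T
    · exact ⟨[], v.1, by simpa using huv', by simp, by simp [hp, hua], hv, hva, by simp⟩
    · obtain ⟨l, b, h1, h2, h3, h4, h5, h6⟩ := ih hw.1 hx hv
      refine ⟨v.1 :: l, b, ?_, ?_, ?_, h4, h5, ?_⟩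
      · simp only [List.cons_append, List.isChain_cons_cons] at h1 ⊢
        exact ⟨huv', h1⟩
      · rw [List.nodup_cons]
        refine ⟨fun hm => hw.2 ?_, h2⟩
        have := h6 _ hm
        rw [List.mem_map] at this
        obtain ⟨z, hz, hzu⟩ := this
        rwa [← Subtype.ext hzu]
      · intro y hy
        rcases List.mem_cons.1 hy with rfl | hy
        · exact ⟨hp, hua⟩
        · exact h3 y hy
      · intro y hy
        rw [Walk.support_cons, List.map_cons]
        rcases List.mem_cons.1 hy with rfl | hy
        · simp
        · exact List.mem_cons_of_mem _ (h6 y hy)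

theorem hit' {G : SimpleGraph V} (hG : G.TwoConnected) (a : V) (T : Set V) {p x : V}
    (hpa : p ≠ a) (hxa : x ≠ a) (hx : x ∈ T) (hp : p ∉ T) :
    ∃ l b, (p :: l ++ [b]).IsChain G.Adj ∧ (p :: l).Nodup ∧ (∀ y ∈ p :: l, y ∉ T ∧ y ≠ a) ∧
      b ∈ T ∧ b ≠ a := by
  classical
  obtain ⟨w⟩ := (hG.2 a).preconnected ⟨p, hpa⟩ ⟨x, hxa⟩
  obtain ⟨l, b, h1, h2, h3, h4, h5, -⟩ := hit G a T w.toPath.1 w.toPath.2 hx hp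
  exact ⟨l, b, h1, h2, h3, h4, h5⟩

theorem third [Fintype V] {G : SimpleGraph V} (hG : G.TwoConnected) (r z : V) :
    ∃ w, w ≠ r ∧ w ≠ z := by
  classical
  by_contra hcon
  push Not at hcon
  have h1 := hG.1
  rw [Nat.card_eq_fintype_card, ← Finset.card_univ] at h1
  have h2 : (Finset.univ : Finset V) ⊆ {r, z} := by
    intro w _
    simp only [Finset.mem_insert, Finset.mem_singleton]
    by_cases h : w = r
    · exact Or.inl h
    · exact Or.inr (hcon w h)
  have h3 := Finset.card_le_card h2
  have h4 := Finset.card_le_two (a := r) (b := z)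
  omega

theorem nbr [Fintype V] {G : SimpleGraph V} (hG : G.TwoConnected) (r z : V) (hrz : r ≠ z) :
    ∃ n, G.Adj r n ∧ n ≠ z := by
  obtain ⟨w, hwr, hwz⟩ := third hG r z
  obtain ⟨l, b, h1, h2, h3, h4, h5⟩ := hit' hG z {w} hrz hwz rfl (by simpa using hwr.symm)
  rcases l with _ | ⟨y, l⟩
  · exact ⟨b, by simpa using h1, h5⟩
  · simp only [List.cons_append, List.isChain_cons_cons] at h1
    exact ⟨y, h1.1, (h3 y (by simp)).2⟩

theorem cycle [Fintype V] {G : SimpleGraph V} (hG : G.TwoConnected) (r : V) :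
    ∃ p : List V, 2 ≤ p.length ∧ p.Nodup ∧ (∀ x ∈ p, x ≠ r) ∧ (r :: (p ++ [r])).IsChain G.Adj := by
  obtain ⟨z, hz, -⟩ := third hG r r
  obtain ⟨p, hp, -⟩ := nbr hG r z hz.symm
  obtain ⟨q, hq, hqp⟩ := nbr hG r p hp.ne
  obtain ⟨l, b, h1, h2, h3, h4, h5⟩ := hit' hG r {q} hp.ne.symm hq.ne.symm rfl
    (by simpa using hqp.symm)
  obtain rfl : b = q := h4
  refine ⟨p :: l ++ [b], by simp, ?_, ?_, ?_⟩
  · rw [List.nodup_append]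
    refine ⟨h2, by simp, ?_⟩
    rintro x hx y hy rfl
    exact (h3 x hx).1 (by simpa using hy)
  · intro x hx
    rw [List.mem_append] at hx
    rcases hx with hx | hx
    · exact (h3 x hx).2
    · simp at hx; subst hx; exact h5
  · have h6 : (p :: l ++ [b] ++ [r]).IsChain G.Adj := by
      rw [List.append_assoc]
      apply List.isChain_split.2
      exact ⟨h1, by simpa using hq.symm⟩
    simp only [List.cons_append, List.isChain_cons_cons] at h6 ⊢
    exact ⟨hp, h6⟩

theorem ear {G : SimpleGraph V} (hG : G.TwoConnected) (S : Set V) {s t x : V}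
    (hs : s ∈ S) (ht : t ∈ S) (hst : s ≠ t) (hx : x ∉ S) :
    ∃ a ∈ S, ∃ b ∈ S, a ≠ b ∧ ∃ p : List V, p ≠ [] ∧ p.Nodup ∧ (∀ x ∈ p, x ∉ S) ∧
      (a :: (p ++ [b])).IsChain G.Adj := by
  obtain ⟨l, a, h1, h2, h3, h4, h5⟩ := hit' hG s S (p := x) (x := t) (by rintro rfl; exact hx hs)
    hst.symm ht hx
  obtain ⟨y, hy, hya⟩ : ∃ y, y ∉ S ∧ G.Adj y a := by
    obtain ⟨q, y, hq⟩ : ∃ q y, x :: l = q ++ [y] :=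
      ⟨_, _, (List.dropLast_append_getLast (l := x :: l) (by simp)).symm⟩
    refine ⟨y, (h3 y (by rw [hq]; simp)).1, ?_⟩
    rw [hq, List.append_assoc] at h1
    simpa using h1.right_of_append
  have hya' : y ≠ a := hya.ne
  obtain ⟨m, b, k1, k2, k3, k4, k5⟩ := hit' hG a S (p := y) (x := s) hya' h5.symm hs hy
  refine ⟨a, h4, b, k4, k5.symm, y :: m, by simp, k2, fun x hx => (k3 x hx).1, ?_⟩
  simp only [List.cons_append, List.isChain_cons_cons] at k1 ⊢
  exact ⟨hya.symm, k1⟩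

theorem PO.root {G : SimpleGraph V} {r : V} {c : Sym2 V → ℕ} {k f : ℕ} {T : V → Prop} {l : List V}
    (h : PO G r c k f T r l) : l = [] := by
  obtain ⟨m, hm⟩ := h.last
  have h3 := h.nodup
  rcases m with _ | ⟨z, m⟩
  · simpa using hm
  · simp at hm
    rw [hm.2] at h3
    simp at h3

theorem start (G : SimpleGraph V) (r : V) : St G r {r} (fun _ => 0) (fun _ => 0) := by
  refine ⟨rfl, by simp, rfl, ?_, ?_, ?_⟩
  · rintro u rfl v rfl _; rfl
  · rintro v rfl
    exact ⟨[], by simp, by simp, by simp, ⟨[], rfl⟩, by simp [cl, eds, P3], Or.inl ⟨rfl, rfl⟩⟩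
  · rintro v rfl
    exact ⟨[], by simp, by simp, by simp, ⟨[], rfl⟩, by simp [cl, eds, P3], Or.inl ⟨rfl, rfl⟩⟩

theorem grow_first [Fintype V] {G : SimpleGraph V} (hG : G.TwoConnected) (r : V) :
    ∃ S : Set V, ∃ t ∈ S, t ≠ r ∧ ∃ c pos, St G r S c pos := by
  obtain ⟨p, h1, h2, h3, h4⟩ := cycle hG r
  have hst := start G r
  obtain ⟨la, hla⟩ := hst.down r rfl
  obtain ⟨lb, hlb⟩ := hst.up r rfl
  obtain rfl := hla.root
  obtain rfl := hlb.root
  obtain ⟨h, k1, k2, k3, k4⟩ := color_ear [3, 1] (by simp [P3]) [3] (by simp) 1 (by simp [P3])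
    (p.length - 2)
  have hp : p ≠ [] := by rintro rfl; simp at h1
  refine ⟨{r} ∪ {x | x ∈ p}, p.head hp, Or.inr (List.head_mem hp), h3 _ (List.head_mem hp), ?_⟩
  refine step hst (a := r) (b := r) rfl rfl (Or.inl rfl) hp h2 (by simpa using h3) h4 (Or.inr h1)
    hla hlb (g := 1 :: (h ++ [3])) ?_ ?_ ?_ ?_ ?_ ?_
  · simp [k1]; omega
  · intro z hz
    simp at hz
    rcases hz with rfl | hz | rfl
    · omega
    · exact k2 z hz
    · omega
  · rw [← List.cons_append, List.dropLast_concat]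
    simpa [cl, eds] using k3
  · simpa [cl, eds] using k4
  · exact fun _ => ⟨_, rfl⟩
  · exact fun _ => ⟨1 :: h, by simp⟩

theorem exists_first (D : List ℕ) (hD : P3 D) : ∃ e < 5, P3 (e :: D) := by
  obtain ⟨w, h5, -, -, hw⟩ := avoidU 0 0 D
  exact ⟨w, h5, hw, hD⟩

theorem grow {G : SimpleGraph V} (hG : G.TwoConnected) {r : V} {S : Set V} {t x : V}
    (ht : t ∈ S) (htr : t ≠ r) (hx : x ∉ S) {c : Sym2 V → ℕ} {pos : V → ℕ} (hst : St G r S c pos) :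
    ∃ S' : Set V, S ⊂ S' ∧ ∃ c pos, St G r S' c pos := by
  obtain ⟨a, ha, b, hb, hab, p, hp, h2, h3, h4⟩ : ∃ a ∈ S, ∃ b ∈ S, pos a < pos b ∧
      ∃ p : List V, p ≠ [] ∧ p.Nodup ∧ (∀ x ∈ p, x ∉ S) ∧ (a :: (p ++ [b])).IsChain G.Adj := by
    obtain ⟨a, ha, b, hb, hab, p, hp, h2, h3, h4⟩ := ear hG S ht hst.hr htr hx
    rcases lt_trichotomy (pos a) (pos b) with h | h | h
    · exact ⟨a, ha, b, hb, h, p, hp, h2, h3, h4⟩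
    · exact absurd (hst.inj a ha b hb h) hab
    · refine ⟨b, hb, a, ha, h, p.reverse, by simpa using hp, List.nodup_reverse.2 h2,
        by simpa using h3, ?_⟩
      have e : b :: (p.reverse ++ [a]) = (a :: (p ++ [b])).reverse := by simp
      rw [e, List.isChain_reverse]
      exact h4.imp fun x y h => h.symm
  have hbr : b ≠ r := by
    rintro rfl
    rw [hst.pos0] at hab
    omega
  refine ⟨S ∪ {x | x ∈ p}, ?_, ?_⟩
  · refine ⟨Set.subset_union_left, fun h => ?_⟩
    exact h3 _ (List.head_mem hp) (h (Or.inr (List.head_mem hp)))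
  obtain ⟨la, hla⟩ := hst.down a ha
  obtain ⟨lb, hlb⟩ := hst.up b hb
  obtain ⟨e, he5, he, hea⟩ : ∃ e < 5, P3 (e :: (cl c (a :: la) ++ [3])) ∧ (a = r → e = 1) := by
    by_cases har : a = r
    · subst har
      obtain rfl := hla.root
      exact ⟨1, by omega, by simp [P3, cl, eds], fun _ => rfl⟩
    · obtain ⟨e, h5, he⟩ := exists_first _ hla.prop
      exact ⟨e, h5, he, fun h => absurd h har⟩
  obtain ⟨h, k1, k2, k3, k4⟩ := color_ear _ hlb.prop _ (by simp) e he (p.length - 1)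
  have hpl := List.length_pos_iff.2 hp
  refine step hst ha hb (Or.inr hab) hp h2 h3 h4 (Or.inl (by rintro rfl; omega))
    hla hlb (g := e :: h) ?_ ?_ ?_ ?_ ?_ ?_
  · simp [k1]; omega
  · intro z hz
    rcases List.mem_cons.1 hz with rfl | hz
    · exact he5
    · exact k2 z hz
  · obtain ⟨q, y, rfl⟩ : ∃ q y, h = q ++ [y] :=
      ⟨_, _, (List.dropLast_append_getLast (l := h) (by rintro rfl; simp at k1)).symm⟩
    rw [← List.cons_append, List.dropLast_concat]
    have := P3_suffix (l := [y]) (m := q.reverse ++ e :: (cl c (a :: la) ++ [3])) (by simpa using k3)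
    simpa using this
  · simpa using k4
  · intro har
    exact ⟨h, by rw [hea har]⟩
  · exact fun h => absurd h hbr

theorem exists_full [Fintype V] {G : SimpleGraph V} (hG : G.TwoConnected) (r : V) :
    ∃ c pos, St G r Set.univ c pos := by
  obtain ⟨S₀, t, ht, htr, h0⟩ := grow_first hG r
  obtain ⟨S, hS⟩ := (Set.toFinite {S : Set V | t ∈ S ∧ ∃ c pos, St G r S c pos}).exists_maximal
    ⟨S₀, ht, h0⟩
  obtain ⟨c, pos, hst⟩ := hS.1.2
  by_cases hu : S = Set.univ
  · subst hu; exact ⟨c, pos, hst⟩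
  · obtain ⟨x, hx⟩ := (Set.ne_univ_iff_exists_notMem S).1 hu
    obtain ⟨S', hSS, h'⟩ := grow hG hS.1.1 htr hx hst
    exact absurd (hS.2 ⟨hSS.1 hS.1.1, h'⟩ hSS.1) hSS.2

theorem joined {G : SimpleGraph V} {r : V} {c : Sym2 V → ℕ} {pos : V → ℕ}
    (h : St G r Set.univ c pos) {u v : V} (huv : pos u < pos v) :
    ∃ l, (u :: l).IsChain G.Adj ∧ (u :: l).Nodup ∧ (u :: l).getLast? = some v ∧
      P3 (cl c (u :: l)) := by
  obtain ⟨la, hla⟩ := h.down u trivial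
  obtain ⟨lb, hlb⟩ := h.up v trivial
  have hvr : v ≠ r := by
    rintro rfl
    rw [h.pos0] at huv
    omega
  obtain ⟨d, hd⟩ := hla.last
  obtain ⟨m, hm⟩ := hlb.last
  have hrm : r ∉ m := by
    have := hlb.nodup
    rw [hm, List.nodup_append] at this
    intro hr
    exact this.2.2 r hr r (by simp) rfl
  have hcl : cl c (d ++ r :: m.reverse) = cl c (u :: la) ++ (cl c (v :: lb)).reverse := by
    rw [hd, hm, cl, eds_append, List.map_append, cl, cl, ← List.map_reverse, ← eds_reverse]
    simp
  have hl : u :: (la ++ m.reverse) = d ++ r :: m.reverse := by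
    rw [← List.cons_append, hd]; simp
  refine ⟨la ++ m.reverse, ?_, ?_, ?_, ?_⟩
  · rw [hl, List.isChain_split]
    refine ⟨hd ▸ hla.chain, ?_⟩
    have e : r :: m.reverse = (m ++ [r]).reverse := by simp
    rw [e, List.isChain_reverse, ← hm]
    exact hlb.chain.imp fun x y h => h.symm
  · rw [← List.cons_append, List.nodup_append]
    refine ⟨hla.nodup, ?_, ?_⟩
    · have := hlb.nodup
      rw [hm] at this
      exact List.nodup_reverse.2 this.of_append_left
    · rintro x hx y hy rfl
      have hxm : x ∈ m := by simpa using hy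
      have h1 := (hla.mem x hx).2
      have h2 := (hlb.mem x (by rw [hm]; simp [hxm])).2
      rcases h2 with rfl | h2
      · exact hrm hxm
      · omega
  · rw [hl]
    rcases m with _ | ⟨z, m⟩
    · simp at hm; exact absurd hm.1 hvr
    · simp at hm
      simp [hm.1]
      rw [List.getLast?_cons]
      simp
  · rw [hl, hcl]
    obtain ⟨tb, htb⟩ := hlb.fin.resolve_left (fun h => hvr h.1)
    have hpb := P3_reverse hlb.prop
    rw [htb] at hpb
    simp at hpb
    rw [htb]
    simp only [List.reverse_append, List.reverse_cons, List.reverse_nil, List.nil_append,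
      List.cons_append]
    rcases hla.fin with ⟨rfl, rfl⟩ | ⟨ta, hta⟩
    · simpa [cl, eds] using hpb.2
    · have hpa := hla.prop
      rw [hta] at hpa ⊢
      have := P3_glue ta 1 3 tb.reverse (by simpa using hpa) hpb
      simpa using this

theorem toWalk {G : SimpleGraph V} (c : Sym2 V → ℕ) (l : List V) : ∀ (u v : V),
    (u :: l).IsChain G.Adj → (u :: l).getLast? = some v →
    ∃ w : G.Walk u v, w.support = u :: l ∧ w.edges = eds (u :: l) := by
  induction l with
  | nil =>
    intro u v _ h
    simp at h
    subst h
    exact ⟨Walk.nil, by simp [eds]⟩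
  | cons y l ih =>
    intro u v h1 h2
    rw [List.isChain_cons_cons] at h1
    obtain ⟨w, h3, h4⟩ := ih y v h1.2 (by simpa using h2)
    exact ⟨Walk.cons h1.1 w, by simp [h3], by simp [h4, eds]⟩

theorem proper {G : SimpleGraph V} (c : Sym2 V → ℕ) {u v : V} (w : G.Walk u v)
    (h : P3 (w.edges.map c)) : w.IsDistProper 2 c := by
  rw [P3_iff] at h
  intro i j hi hj hij hj2
  have := h i j (by simpa using hi) (by simpa using hj) hij hj2
  rwa [List.getElem_map, List.getElem_map] at this

theorem exists_walk {G : SimpleGraph V} {r : V} {c : Sym2 V → ℕ} {pos : V → ℕ}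
    (h : St G r Set.univ c pos) {u v : V} (huv : pos u < pos v) :
    ∃ w : G.Walk u v, w.IsPath ∧ P3 (w.edges.map c) := by
  obtain ⟨l, h1, h2, h3, h4⟩ := joined h huv
  obtain ⟨w, k1, k2⟩ := toWalk c l u v h1 h3
  refine ⟨w, ?_, ?_⟩
  · rw [Walk.isPath_def, k1]; exact h2
  · rw [k2]; exact h4

end PC

/-- If a graph `G` is `2`-connected, then `pc_{1,2}(G) ≤ 5`. -/
theorem pc_le_five_of_twoConnected {V : Type*} [Fintype V] (G : SimpleGraph V)
    (hG : G.TwoConnected) : G.pc 2 ≤ 5 := by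
  have hne : Nonempty V := by
    by_contra hcon
    rw [not_nonempty_iff] at hcon
    have := hG.1
    simp at this
  obtain ⟨r⟩ := hne
  obtain ⟨c, pos, h⟩ := PC.exists_full hG r
  apply Nat.sInf_le
  refine ⟨c, fun e _ => h.c5 e, fun u v huv => ?_⟩
  rcases lt_trichotomy (pos u) (pos v) with hlt | heq | hlt
  · obtain ⟨w, h1, h2⟩ := PC.exists_walk h hlt
    exact ⟨w, h1, PC.proper c w h2⟩
  · exact absurd (h.inj u trivial v trivial heq) huv
  · obtain ⟨w, h1, h2⟩ := PC.exists_walk h hlt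
    refine ⟨w.reverse, h1.reverse, PC.proper c _ ?_⟩
    rw [Walk.edges_reverse, List.map_reverse]
    exact PC.P3_reverse h2
end

section
/- Let G be a graph whose complement Ḡ is connected with diameter at least 4. Then G is connected and pc_{1,2}(G) ≤ 3. -/
open SimpleGraph

namespace PCAux

variable {V : Type*} {G : SimpleGraph V}

def Conn (G : SimpleGraph V) (c : Sym2 V → ℕ) (u v : V) : Prop :=
  ∃ p : G.Walk u v, p.IsPath ∧ p.IsDistProper 2 c

theorem Conn.symm {c : Sym2 V → ℕ} {u v : V} (h : Conn G c u v) : Conn G c v u := by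
  obtain ⟨p, hp, hd⟩ := h
  refine ⟨p.reverse, hp.reverse, ?_⟩
  intro i j hi hj hij hji
  have hi' := hi
  have hj' := hj
  simp only [Walk.edges_reverse, List.length_reverse] at hi' hj'
  simp only [Walk.edges_reverse, List.getElem_reverse]
  exact (hd _ _ (by omega) (by omega) (by omega) (by omega)).symm

theorem conn1 {c : Sym2 V → ℕ} {u v : V} (h : G.Adj u v) : Conn G c u v := by
  refine ⟨.cons h .nil, by simp [h.ne], ?_⟩
  intro i j hi hj hij hji
  simp at hi hj
  omega

theorem conn2 {c : Sym2 V → ℕ} {u a v : V} (h : G.Adj u a) (h' : G.Adj a v) (huv : u ≠ v)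
    (h1 : c s(u, a) ≠ c s(a, v)) : Conn G c u v := by
  refine ⟨.cons h (.cons h' .nil), by simp [h.ne, h'.ne, huv], ?_⟩
  intro i j hi hj hij hji
  simp at hi hj
  obtain ⟨rfl, rfl⟩ : i = 0 ∧ j = 1 := by omega
  simpa using h1

theorem conn3 {c : Sym2 V → ℕ} {u a b v : V} (h : G.Adj u a) (h' : G.Adj a b) (h'' : G.Adj b v)
    (huv : u ≠ v) (hub : u ≠ b) (hav : a ≠ v)
    (h1 : c s(u, a) ≠ c s(a, b)) (h2 : c s(u, a) ≠ c s(b, v)) (h3 : c s(a, b) ≠ c s(b, v)) :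
    Conn G c u v := by
  refine ⟨.cons h (.cons h' (.cons h'' .nil)), by simp [h.ne, h'.ne, h''.ne, huv, hub, hav], ?_⟩
  intro i j hi hj hij hji
  simp at hi hj
  interval_cases j <;> interval_cases i <;> simpa

theorem conn4 {c : Sym2 V → ℕ} {u a b d v : V} (h : G.Adj u a) (h' : G.Adj a b) (h'' : G.Adj b d)
    (h''' : G.Adj d v)
    (huv : u ≠ v) (hub : u ≠ b) (hud : u ≠ d) (hav : a ≠ v) (had : a ≠ d) (hbv : b ≠ v)
    (h1 : c s(u, a) ≠ c s(a, b)) (h2 : c s(u, a) ≠ c s(b, d)) (h3 : c s(a, b) ≠ c s(b, d))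
    (h4 : c s(a, b) ≠ c s(d, v)) (h5 : c s(b, d) ≠ c s(d, v)) :
    Conn G c u v := by
  refine ⟨.cons h (.cons h' (.cons h'' (.cons h''' .nil))),
    by simp [h.ne, h'.ne, h''.ne, h'''.ne, huv, hub, hav, hud, had, hbv], ?_⟩
  intro i j hi hj hij hji
  simp at hi hj
  interval_cases j <;> interval_cases i <;> first | omega | simpa

open Classical in
noncomputable def col0 (L : V → ℕ) (t : V) (u v : V) : ℕ :=
  if L u = 0 ∧ L v = 2 then 0 else
  if L u = 0 ∧ L v = 3 then 2 else
  if L u = 0 ∧ L v = 4 then 1 else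
  if L u = 2 ∧ L v = 4 then 2 else
  if L u = 1 ∧ L v = 4 then 0 else
  if L u = 1 ∧ L v = 3 then (if v = t then 0 else 2) else 0

noncomputable def col (L : V → ℕ) (t : V) : Sym2 V → ℕ :=
  Sym2.lift ⟨fun u v => if L u ≤ L v then col0 L t u v else col0 L t v u, by
    intro u v
    by_cases h : L u = L v
    · simp only [h, le_refl, if_true]
      unfold col0
      grind
    · grind⟩

theorem main (L : V → ℕ) (x0 x1 x2 x3 x4 : V) (h0 : ∀ v, L v = 0 ↔ v = x0) (h1 : L x1 = 1)
    (h2 : L x2 = 2) (h3 : L x3 = 3) (h4 : L x4 = 4) (hL : ∀ v, L v ≤ 4)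
    (hadj : ∀ u v, L u + 2 ≤ L v → G.Adj u v) : G.IsPCColoring 2 3 (col L x3) := by
  have hx : L x0 = 0 := (h0 _).2 rfl
  constructor
  · intro e _
    induction e with
    | _ u v =>
    simp only [col, Sym2.lift_mk, col0]
    split_ifs <;> omega
  have key : ∀ u v, L u ≤ L v → u ≠ v → Conn G (col L x3) u v := by
    intro u v huv hne
    have hadj' : ∀ u v, L v + 2 ≤ L u → G.Adj u v := fun u v h => (hadj v u h).symm
    by_cases hlt : L u + 2 ≤ L v
    · exact conn1 (hadj _ _ hlt)
    have hv4 := hL v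
    have hnL : ∀ a b, L a ≠ L b → a ≠ b := fun a b h h' => h (h' ▸ rfl)
    by_cases heq : L u = L v
    · have : L v = 0 ∨ L v = 1 ∨ L v = 2 ∨ L v = 3 ∨ L v = 4 := by omega
      rcases this with h | h | h | h | h <;> rw [h] at heq
      · exact absurd (((h0 _).1 heq).trans ((h0 _).1 h).symm) hne
      · apply conn4 (a := x3) (b := x0) (d := x4) <;>
        first
        | exact hne
        | (apply hadj; omega)
        | (apply hadj'; omega)
        | (apply hnL; omega)
        | simp [col, col0, *]
      · apply conn3 (a := x0) (b := x4) <;>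
        first
        | exact hne
        | (apply hadj; omega)
        | (apply hadj'; omega)
        | (apply hnL; omega)
        | simp [col, col0, *]
      · have aux : ∀ u v, L u = 3 → L v = 3 → u ≠ v → v ≠ x3 → Conn G (col L x3) u v := by
          intro u v heq h hne hv
          apply conn4 (a := x0) (b := x4) (d := x1) <;>
          first
          | exact hne
          | (apply hadj; omega)
          | (apply hadj'; omega)
          | (apply hnL; omega)
          | simp [col, col0, heq, h, hx, h4, h1, hv]
        by_cases hv : v = x3
        · exact (aux v u h heq hne.symm (hv ▸ hne)).symm
        · exact aux u v heq h hne hv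
      · apply conn3 (a := x0) (b := x2) <;>
        first
        | exact hne
        | (apply hadj; omega)
        | (apply hadj'; omega)
        | (apply hnL; omega)
        | simp [col, col0, *]
    · have : (L u = 0 ∧ L v = 1) ∨ (L u = 1 ∧ L v = 2) ∨ (L u = 2 ∧ L v = 3) ∨
          (L u = 3 ∧ L v = 4) := by omega
      rcases this with ⟨h, h'⟩ | ⟨h, h'⟩ | ⟨h, h'⟩ | ⟨h, h'⟩
      · apply conn2 (a := x4) <;>
        first
        | exact hne
        | (apply hadj; omega)
        | (apply hadj'; omega)
        | simp [col, col0, h, h', h4]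
      · apply conn2 (a := x4) <;>
        first
        | exact hne
        | (apply hadj; omega)
        | (apply hadj'; omega)
        | simp [col, col0, h, h', h4]
      · apply conn2 (a := x0) <;>
        first
        | exact hne
        | (apply hadj; omega)
        | (apply hadj'; omega)
        | simp [col, col0, h, h', hx]
      · apply conn2 (a := x0) <;>
        first
        | exact hne
        | (apply hadj; omega)
        | (apply hadj'; omega)
        | simp [col, col0, h, h', hx]
  intro u v hne
  rcases le_total (L u) (L v) with h | h
  · exact key u v h hne
  · exact (key v u h hne.symm).symm

theorem layer (H : SimpleGraph V) (hc : H.Connected) (x y : V) (n : ℕ) (hn : n ≤ H.dist x y) :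
    ∃ z, H.dist x z = n := by
  obtain ⟨p, hp⟩ := hc.exists_walk_length_eq_dist x y
  have key : ∀ {a b : V} (q : H.Walk a b) (m : ℕ), H.dist x a ≤ m → m ≤ H.dist x b →
      ∃ z, H.dist x z = m := by
    intro a b q
    induction q with
    | nil => intro m h h'; exact ⟨_, le_antisymm h h'⟩
    | @cons a b c hab q ih =>
      intro m h h'
      by_cases hm : H.dist x b ≤ m
      · exact ih m hm h'
      · have h1 := hc.dist_triangle (u := x) (v := a) (w := b)
        have h2 : H.dist a b = 1 := SimpleGraph.dist_eq_one_iff_adj.2 hab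
        exact ⟨a, by omega⟩
  exact key p n (by simp) hn

end PCAux

/-- If the complement of `G` is connected with diameter at least `4`, then `G` is
connected and `pc_{1,2}(G) ≤ 3`. -/
theorem pc_le_three_of_compl_diam_ge_four {V : Type*} [Fintype V] (G : SimpleGraph V)
    (hc : Gᶜ.Connected) (hdiam : 4 ≤ Gᶜ.diam) :
    G.Connected ∧ G.pc 2 ≤ 3 := by
  haveI := hc.nonempty
  obtain ⟨x, y, hxy⟩ := Gᶜ.exists_dist_eq_diam
  rw [← hxy] at hdiam
  obtain ⟨x1, h1⟩ := PCAux.layer Gᶜ hc x y 1 (by omega)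
  obtain ⟨x2, h2⟩ := PCAux.layer Gᶜ hc x y 2 (by omega)
  obtain ⟨x3, h3⟩ := PCAux.layer Gᶜ hc x y 3 (by omega)
  obtain ⟨x4, h4⟩ := PCAux.layer Gᶜ hc x y 4 (by omega)
  have hm : G.IsPCColoring 2 3 (PCAux.col (fun v => min (Gᶜ.dist x v) 4) x3) := by
    apply PCAux.main (fun v => min (Gᶜ.dist x v) 4) x x1 x2 x3 x4
    · intro v
      have := hc.dist_eq_zero_iff (u := x) (v := v)
      constructor
      · intro h
        exact (this.1 (by omega)).symm
      · rintro rfl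
        simp
    · simp [h1]
    · simp [h2]
    · simp [h3]
    · simp [h4]
    · intro v
      simp
    · intro u v h
      by_contra hn
      have hne : u ≠ v := by
        rintro rfl
        omega
      have hab : Gᶜ.Adj u v := by
        rw [SimpleGraph.compl_adj]
        exact ⟨hne, hn⟩
      have e1 := hc.dist_triangle (u := x) (v := u) (w := v)
      have e2 : Gᶜ.dist u v = 1 := SimpleGraph.dist_eq_one_iff_adj.2 hab
      omega
  refine ⟨⟨?_⟩, Nat.sInf_le ⟨_, hm⟩⟩
  intro u v
  by_cases h : u = v
  · rw [h]
  · obtain ⟨p, -⟩ := hm.2 u v h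
    exact ⟨p⟩
end

section
/- Let G be a connected graph whose complement Ḡ is connected, triangle-free and has diameter 2. Then pc_{1,2}(G) ≤ 3. -/
open SimpleGraph

section aux
variable {V : Type*} {G : SimpleGraph V}

lemma aux_path1 (c : Sym2 V → ℕ) {u v : V} (h : G.Adj u v) :
    ∃ p : G.Walk u v, p.IsPath ∧ p.IsDistProper 2 c := by
  refine ⟨.cons h .nil, ?_, ?_⟩
  · simp [h.ne]
  · intro i j hi hj hij _
    simp at hi hj
    omega

lemma aux_path2 (c : Sym2 V → ℕ) {u w v : V} (h : G.Adj u w) (h' : G.Adj w v) (huv : u ≠ v)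
    (hc : c s(u, w) ≠ c s(w, v)) :
    ∃ p : G.Walk u v, p.IsPath ∧ p.IsDistProper 2 c := by
  refine ⟨.cons h (.cons h' .nil), ?_, ?_⟩
  · simp [h.ne, h'.ne, huv]
  · intro i j hi hj hij _
    simp at hi hj
    obtain rfl : i = 0 := by omega
    obtain rfl : j = 1 := by omega
    simpa using hc

lemma aux_path3 (c : Sym2 V → ℕ) {u w z v : V} (h : G.Adj u w) (h' : G.Adj w z)
    (h'' : G.Adj z v) (huv : u ≠ v) (huz : u ≠ z) (hwv : w ≠ v)
    (hc : c s(u, w) ≠ c s(w, z)) (hc' : c s(w, z) ≠ c s(z, v)) (hc'' : c s(u, w) ≠ c s(z, v)) :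
    ∃ p : G.Walk u v, p.IsPath ∧ p.IsDistProper 2 c := by
  refine ⟨.cons h (.cons h' (.cons h'' .nil)), ?_, ?_⟩
  · simp [h.ne, h'.ne, h''.ne, huv, huz, hwv]
  · intro i j hi hj hij _
    simp at hi hj
    have : (i = 0 ∧ j = 1) ∨ (i = 0 ∧ j = 2) ∨ (i = 1 ∧ j = 2) := by omega
    rcases this with ⟨rfl, rfl⟩ | ⟨rfl, rfl⟩ | ⟨rfl, rfl⟩
    · simpa using hc
    · simpa using hc''
    · simpa using hc'

lemma aux_symm (c : Sym2 V → ℕ) {u v : V}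
    (h : ∃ p : G.Walk u v, p.IsPath ∧ p.IsDistProper 2 c) :
    ∃ p : G.Walk v u, p.IsPath ∧ p.IsDistProper 2 c := by
  obtain ⟨p, hp, hd⟩ := h
  refine ⟨p.reverse, hp.reverse, ?_⟩
  intro i j hi hj hij hij2
  simp only [Walk.edges_reverse, List.getElem_reverse]
  simp only [Walk.edges_reverse, List.length_reverse] at hi hj
  exact (hd _ _ (by omega) (by omega) (by omega) (by omega)).symm

end aux

theorem pc_le_three_of_compl_triangleFree_diam_two {V : Type*} [Fintype V]
    (G : SimpleGraph V) (hG : G.Connected) (hc : Gᶜ.Connected)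
    (htf : Gᶜ.CliqueFree 3) (hdiam : Gᶜ.diam = 2) :
    G.pc 2 ≤ 3 := by
  classical
  have tri : ∀ u v w, Gᶜ.Adj u v → Gᶜ.Adj v w → Gᶜ.Adj u w → False := by
    intro u v w h1 h2 h3
    exact htf {u, v, w} (is3Clique_triple_iff.2 ⟨h1, h3, h2⟩)
  have dich : ∀ u v, u ≠ v → G.Adj u v ∨ Gᶜ.Adj u v := by
    intro u v h
    by_cases h' : G.Adj u v
    · exact .inl h'
    · exact .inr ((compl_adj _ _ _).2 ⟨h, h'⟩)
  have nboth : ∀ u v, G.Adj u v → Gᶜ.Adj u v → False := by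
    intro u v h h'
    exact ((compl_adj _ _ _).1 h').2 h
  have common : ∀ u v, G.Adj u v → ∃ w, Gᶜ.Adj u w ∧ Gᶜ.Adj v w := by
    intro u v huv
    have hle : Gᶜ.dist u v ≤ 2 := by
      rw [← hdiam]
      exact dist_le_diam (ediam_ne_top_of_diam_ne_zero (by omega))
    obtain ⟨p, hp⟩ := hc.exists_walk_length_eq_dist u v
    rw [← hp] at hle
    cases p with
    | nil => exact (huv.ne rfl).elim
    | cons h q =>
      cases q with
      | nil => exact (nboth _ _ huv h).elim
      | cons h2 r =>
        cases r with
        | nil => exact ⟨_, h, h2.symm⟩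
        | cons h3 r => simp at hle
  have hnt : Nontrivial V := nontrivial_of_diam_ne_zero (G := Gᶜ) (by omega)
  obtain ⟨x, y, hxy⟩ := hnt
  obtain ⟨b, hb⟩ : ∃ b, Gᶜ.Adj x b := by
    rcases dich x y hxy with h | h
    · obtain ⟨w, hw, _⟩ := common _ _ h
      exact ⟨w, hw⟩
    · exact ⟨y, h⟩
  set N : Set V := {v | Gᶜ.Adj x v} with hN
  have memN : ∀ v, v ∈ N ↔ Gᶜ.Adj x v := fun v => Iff.rfl
  have hxN : x ∉ N := fun h => ((memN x).1 h).ne rfl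
  obtain ⟨p⟩ := hG.preconnected b x
  obtain ⟨d, -, ha, hs0⟩ := p.exists_boundary_dart N hb hxN
  obtain ⟨⟨a, s0⟩, has⟩ := d
  simp only at ha hs0 has
  have cliqueN : ∀ n ∈ N, ∀ m ∈ N, n ≠ m → G.Adj n m := by
    intro n hn m hm hne
    rcases dich n m hne with h | h
    · exact h
    · exact (tri x n m hn h hm).elim
  -- vertices outside N other than x have a complement-neighbour in N
  have hasH : ∀ s, s ∉ N → s ≠ x → ∃ n ∈ N, Gᶜ.Adj s n := by
    intro s hs hsx
    rcases dich x s hsx.symm with h | h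
    · obtain ⟨w, h1, h2⟩ := common _ _ h
      exact ⟨w, h1, h2⟩
    · exact (hs h).elim
  have neOf : ∀ s, s ∉ N → ∀ n ∈ N, s ≠ n := by
    rintro s hs n hn rfl
    exact hs hn
  have nex : ∀ s n, n ∈ N → G.Adj s n → s ≠ x := by
    rintro s n hn h rfl
    exact nboth _ _ h hn
  let c : Sym2 V → ℕ := fun e => if ∀ u ∈ e, u ∈ N then 1 else if a ∈ e then 2 else 0
  have cNN : ∀ n ∈ N, ∀ m ∈ N, c s(n, m) = 1 := by
    intro n hn m hm
    simp [c, hn, hm]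
  have cNa : ∀ s, s ∉ N → c s(s, a) = 2 := by
    intro s hs
    simp [c, hs]
  have c0 : ∀ s v, s ∉ N → v ≠ a → c s(s, v) = 0 := by
    intro s v hs hv
    have := neOf s hs a ha
    simp [c, hs, hv.symm, this.symm]
  have c1 : ∀ s v, s ∉ N → c s(s, v) ≠ 1 := by
    intro s v hs
    simp only [c]
    rw [if_neg (by simp [hs])]
    split_ifs <;> simp
  refine Nat.sInf_le ⟨c, ?_, ?_⟩
  · intro e _
    simp only [c]
    split_ifs <;> simp
  -- the case of one endpoint in N
  have caseN : ∀ u v, Gᶜ.Adj u v → u ∉ N → v ∈ N →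
      ∃ p : G.Walk u v, p.IsPath ∧ p.IsDistProper 2 c := by
    intro u v huv hu hv
    by_cases hS : ∃ n ∈ N, G.Adj u n
    · obtain ⟨n, hn, hun⟩ := hS
      have hnv : n ≠ v := by
        rintro rfl
        exact nboth _ _ hun huv
      refine aux_path2 c hun (cliqueN n hn v hv hnv) huv.ne ?_
      rw [cNN n hn v hv]
      exact c1 _ _ hu
    · push Not at hS
      have hus : u ≠ s0 := by
        rintro rfl
        exact hS a ha has.symm
      have hus0 : G.Adj u s0 := by
        rcases dich u s0 hus with h | h
        · exact h
        · obtain ⟨n, hn, h2⟩ := hasH s0 hs0 (nex _ a ha has.symm)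
          have h3 := (dich u n (neOf u hu n hn)).resolve_left (hS n hn)
          exact (tri _ _ _ h h2 h3).elim
      have k0 : c s(u, s0) = 0 := c0 _ _ hu (neOf s0 hs0 a ha)
      have k1 : c s(s0, a) = 2 := cNa _ hs0
      by_cases hva : a = v
      · subst hva
        refine aux_path2 c hus0 has.symm huv.ne ?_
        omega
      · have k2 := cNN a ha v hv
        exact aux_path3 c hus0 has.symm (cliqueN a ha v hv hva) huv.ne (neOf u hu a ha)
          (neOf s0 hs0 v hv) (by omega) (by omega) (by omega)
  have caseS : ∀ u v, Gᶜ.Adj u v → u ∉ N → v ∉ N → G.Adj u a →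
      ∃ p : G.Walk u v, p.IsPath ∧ p.IsDistProper 2 c := by
    intro u v huv hu hv hua
    obtain ⟨m, hm, hum⟩ := hasH u hu (nex _ a ha hua)
    have hma : m ≠ a := by
      rintro rfl
      exact nboth _ _ hua hum
    have hvm : G.Adj v m := by
      rcases dich v m (neOf v hv m hm) with h | h
      · exact h
      · exact (tri _ _ _ huv h hum).elim
    have k0 := cNa u hu
    have k1 := cNN a ha m hm
    have k2 : c s(m, v) = 0 := by
      rw [Sym2.eq_swap]
      exact c0 v m hv hma
    exact aux_path3 c hua (cliqueN a ha m hm hma.symm) hvm.symm huv.ne (neOf u hu m hm)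
      (neOf v hv a ha).symm (by omega) (by omega) (by omega)
  intro u v huv
  rcases dich u v huv with h | h
  · exact aux_path1 c h
  by_cases hu : u ∈ N <;> by_cases hv : v ∈ N
  · exact (tri x u v hu h hv).elim
  · exact aux_symm c (caseN v u h.symm hv hu)
  · exact caseN u v h hu hv
  · rcases dich u a (neOf u hu a ha) with h1 | h1
    · exact caseS u v h hu hv h1
    · rcases dich v a (neOf v hv a ha) with h2 | h2
      · exact aux_symm c (caseS v u h.symm hv hu h2)
      · exact (tri u v a h h2 h1).elim
end

section
/- Let G be a nontrivial connected graph on n ≥ 2 vertices. Then pc_{1,2}(G) = n − 1 if and only if G is isomorphic to the star S_n (n ≥ 2) or to a double star T(n₁,n₂) for some n₁, n₂ ≥ 1. -/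
open SimpleGraph

/-- The star on `n` vertices: vertex `0` is adjacent to all other vertices. -/
def starGraph (n : ℕ) : SimpleGraph (Fin n) :=
  SimpleGraph.fromRel (fun a _ => a.val = 0)

/-- The double star `T(n₁, n₂)`: two adjacent centers, the first with `n₁` pendant
leaves and the second with `n₂` pendant leaves. -/
def doubleStar (n₁ n₂ : ℕ) : SimpleGraph (Fin 2 ⊕ (Fin n₁ ⊕ Fin n₂)) :=
  SimpleGraph.fromRel (fun a b =>
    (a = Sum.inl 0 ∧ b = Sum.inl 1) ∨
    (a = Sum.inl 0 ∧ ∃ i : Fin n₁, b = Sum.inr (Sum.inl i)) ∨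
    (a = Sum.inl 1 ∧ ∃ j : Fin n₂, b = Sum.inr (Sum.inr j)))

def PR {V : Type*} (G : SimpleGraph V) (S : Finset V) (c : Sym2 V → ℕ) (u v : V) : Prop :=
  ∃ p : G.Walk u v, p.IsPath ∧ p.IsDistProper 2 c ∧ ∀ w ∈ p.support, w ∈ S

theorem PR.symm' {V : Type*} {G : SimpleGraph V} {S : Finset V} {c : Sym2 V → ℕ} {u v : V}
    (h : PR G S c u v) : PR G S c v u := by
  obtain ⟨p, hp, hd, hs⟩ := h
  refine ⟨p.reverse, hp.reverse, ?_, by simpa using hs⟩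
  intro i j hi hj hij hj2
  simp only [Walk.edges_reverse, List.length_reverse] at hi hj
  simp only [Walk.edges_reverse, List.getElem_reverse]
  exact (hd _ _ (by omega) (by omega) (by omega) (by omega)).symm

theorem distProper_cons {V : Type*} {G : SimpleGraph V} {c : Sym2 V → ℕ} {u v w : V}
    (h : G.Adj u v) (p : G.Walk v w) (hd : p.IsDistProper 2 c)
    (hc : ∀ (j : ℕ) (hj : j < p.edges.length), j < 2 → c s(u, v) ≠ c (p.edges[j]'hj)) :
    (Walk.cons h p).IsDistProper 2 c := by
  intro i j hi hj hij hj2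
  simp only [Walk.edges_cons, List.length_cons] at hi hj
  obtain ⟨j, rfl⟩ : ∃ j', j = j' + 1 := ⟨j - 1, by omega⟩
  cases i with
  | zero => simpa using hc j (by omega) (by omega)
  | succ i => simpa using hd i j (by omega) (by omega) (by omega) (by omega)

theorem PR.one {V : Type*} {G : SimpleGraph V} {S : Finset V} {c : Sym2 V → ℕ} {u v : V}
    (h : G.Adj u v) (hu : u ∈ S) (hv : v ∈ S) : PR G S c u v := by
  refine ⟨.cons h .nil, by simp [h.ne], distProper_cons _ _ ?_ (by simp), by simp [hu, hv]⟩
  intro i j hi; simp at hi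

theorem PR.two {V : Type*} {G : SimpleGraph V} {S : Finset V} {c : Sym2 V → ℕ} {u v w : V}
    (h : G.Adj u v) (h' : G.Adj v w) (huw : u ≠ w) (hc : c s(u, v) ≠ c s(v, w))
    (hu : u ∈ S) (hv : v ∈ S) (hw : w ∈ S) : PR G S c u w := by
  refine ⟨.cons h (.cons h' .nil), by simp [h.ne, h'.ne, huw],
    distProper_cons _ _ (distProper_cons _ _ ?_ (by simp)) ?_, by simp [hu, hv, hw]⟩
  · intro i j hi; simp at hi
  · intro j hj; simp at hj; subst hj; simpa using hc

theorem PR.three {V : Type*} {G : SimpleGraph V} {S : Finset V} {c : Sym2 V → ℕ} {u v w x : V}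
    (h : G.Adj u v) (h' : G.Adj v w) (h'' : G.Adj w x) (huw : u ≠ w) (hux : u ≠ x) (hvx : v ≠ x)
    (hc : c s(u, v) ≠ c s(v, w)) (hc1 : c s(u, v) ≠ c s(w, x)) (hc2 : c s(v, w) ≠ c s(w, x))
    (hu : u ∈ S) (hv : v ∈ S) (hw : w ∈ S) (hx : x ∈ S) : PR G S c u x := by
  refine ⟨.cons h (.cons h' (.cons h'' .nil)), by simp [h.ne, h'.ne, h''.ne, huw, hux, hvx],
    distProper_cons _ _ (distProper_cons _ _ (distProper_cons _ _ ?_ (by simp)) ?_) ?_,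
    by simp [hu, hv, hw, hx]⟩
  · intro i j hi; simp at hi
  · intro j hj; simp at hj; subst hj; simpa using hc2
  · intro j hj hj2
    interval_cases j
    · simpa using hc
    · simpa using hc1

theorem PR.four {V : Type*} {G : SimpleGraph V} {S : Finset V} {c : Sym2 V → ℕ} {u v w x y : V}
    (h : G.Adj u v) (h' : G.Adj v w) (h'' : G.Adj w x) (h3 : G.Adj x y)
    (huw : u ≠ w) (hux : u ≠ x) (hvx : v ≠ x) (huy : u ≠ y) (hvy : v ≠ y) (hwy : w ≠ y)
    (hc : c s(u, v) ≠ c s(v, w)) (hc1 : c s(u, v) ≠ c s(w, x)) (hc2 : c s(v, w) ≠ c s(w, x))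
    (hc3 : c s(v, w) ≠ c s(x, y)) (hc4 : c s(w, x) ≠ c s(x, y))
    (hu : u ∈ S) (hv : v ∈ S) (hw : w ∈ S) (hx : x ∈ S) (hy : y ∈ S) : PR G S c u y := by
  refine ⟨.cons h (.cons h' (.cons h'' (.cons h3 .nil))),
    by simp [h.ne, h'.ne, h''.ne, h3.ne, huw, hux, hvx, huy, hvy, hwy],
    distProper_cons _ _ (distProper_cons _ _ (distProper_cons _ _
      (distProper_cons _ _ ?_ (by simp)) ?_) ?_) ?_,
    by simp [hu, hv, hw, hx, hy]⟩
  · intro i j hi; simp at hi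
  · intro j hj; simp at hj; subst hj; simpa using hc4
  · intro j hj hj2
    interval_cases j
    · simpa using hc2
    · simpa using hc3
  · intro j hj hj2
    interval_cases j
    · simpa using hc
    · simpa using hc1

def EC {V : Type*} (G : SimpleGraph V) (S : Finset V) (k : ℕ) : Prop :=
  ∃ c : Sym2 V → ℕ, (∀ u v, G.Adj u v → u ∈ S → v ∈ S → c s(u, v) < k) ∧
    ∀ u ∈ S, ∀ v ∈ S, u ≠ v → PR G S c u v

theorem exists_out {V : Type*} {G : SimpleGraph V} (hG : G.Connected) (A : Set V) {a b : V}
    (ha : a ∈ A) (hb : b ∉ A) : ∃ s ∈ A, ∃ w, w ∉ A ∧ G.Adj s w := by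
  obtain ⟨p⟩ := hG.preconnected a b
  obtain ⟨d, -, h1, h2⟩ := p.exists_boundary_dart A ha hb
  exact ⟨_, h1, _, h2, d.adj⟩

theorem EC.step {V : Type*} [DecidableEq V] {G : SimpleGraph V} {S : Finset V}
    {k : ℕ} (h : EC G S k) {s w : V} (hs : s ∈ S) (hw : w ∉ S) (hsw : G.Adj s w) :
    EC G (insert w S) (k + 1) := by
  obtain ⟨c, hc, hp⟩ := h
  let c' : Sym2 V → ℕ := fun e => if w ∈ e then k else c e
  have key : ∀ u v (p : G.Walk u v), (∀ x ∈ p.support, x ∈ S) → ∀ e ∈ p.edges, w ∉ e ∧ c e < k := by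
    intro u v p hpS e he
    induction e with | _ x y =>
    have hx := hpS _ (p.fst_mem_support_of_mem_edges he)
    have hy := hpS _ (p.snd_mem_support_of_mem_edges he)
    refine ⟨?_, hc _ _ (p.adj_of_mem_edges he) hx hy⟩
    simp only [Sym2.mem_iff]
    rintro (rfl | rfl) <;> contradiction
  have old : ∀ u v (p : G.Walk u v), (∀ x ∈ p.support, x ∈ S) → p.IsDistProper 2 c →
      p.IsDistProper 2 c' := by
    intro u v p hpS hd i j hi hj h1 h2
    have := hd i j hi hj h1 h2
    simpa [c', (key _ _ p hpS _ (List.getElem_mem hi)).1,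
      (key _ _ p hpS _ (List.getElem_mem hj)).1] using this
  have new : ∀ v ∈ S, PR G (insert w S) c' w v := by
    intro v hv
    by_cases hsv : s = v
    · subst hsv
      exact PR.one hsw.symm (by simp) (by simp [hs])
    · obtain ⟨p, hp1, hp2, hp3⟩ := hp s hs v hv hsv
      refine ⟨.cons hsw.symm p, ?_, distProper_cons _ _ (old _ _ p hp3 hp2) ?_, ?_⟩
      · rw [Walk.cons_isPath_iff]
        exact ⟨hp1, fun h => hw (hp3 _ h)⟩
      · intro j hj _
        have := key _ _ p hp3 _ (List.getElem_mem hj)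
        simp only [c', this.1]
        simp
        omega
      · intro x hx
        simp only [Walk.support_cons, List.mem_cons] at hx
        rcases hx with rfl | hx
        · simp
        · simp [hp3 _ hx]
  refine ⟨c', ?_, ?_⟩
  · intro u v huv hu hv
    simp only [c']
    split_ifs with h
    · omega
    · simp only [Sym2.mem_iff, not_or] at h
      simp only [Finset.mem_insert] at hu hv
      have := hc u v huv (hu.resolve_left (Ne.symm h.1)) (hv.resolve_left (Ne.symm h.2))
      omega
  · intro u hu v hv huv
    rw [Finset.mem_insert] at hu hv
    rcases hu with rfl | hu <;> rcases hv with rfl | hv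
    · contradiction
    · exact new v hv
    · exact (new u hu).symm'
    · obtain ⟨p, hp1, hp2, hp3⟩ := hp u hu v hv huv
      exact ⟨p, hp1, old _ _ p hp3 hp2, fun x hx => by simp [hp3 x hx]⟩

theorem EC.bound {V : Type*} [Fintype V] [DecidableEq V] {G : SimpleGraph V} (hG : G.Connected)
    (d : ℕ) : ∀ (m : ℕ) (S : Finset V) (k : ℕ), EC G S k → S.Nonempty → S.card = k + d →
      Fintype.card V = S.card + m → ∃ c, G.IsPCColoring 2 (Fintype.card V - d) c := by
  intro m
  induction m with
  | zero =>
    intro S k h _ hS hV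
    have : S = Finset.univ := by
      rw [← Finset.card_eq_iff_eq_univ]; omega
    subst this
    obtain ⟨c, hc, hp⟩ := h
    refine ⟨c, ?_, ?_⟩
    · intro e he
      induction e with | _ x y =>
      have := hc x y he (by simp) (by simp)
      omega
    · intro u v huv
      obtain ⟨p, hp1, hp2, -⟩ := hp u (by simp) v (by simp) huv
      exact ⟨p, hp1, hp2⟩
  | succ m ih =>
    intro S k h hne hS hV
    obtain ⟨a, ha⟩ := hne
    obtain ⟨b, hb⟩ : ∃ b, b ∉ S := by
      by_contra! hall
      have : S = Finset.univ := by ext; simp [hall]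
      rw [this, Finset.card_univ] at hV
      omega
    obtain ⟨s, hs, w, hw, hsw⟩ := exists_out hG (S : Set V) (a := a) (b := b) (by simpa) (by simpa)
    simp only [Finset.mem_coe] at hs hw
    have h1 : (insert w S).card = S.card + 1 := Finset.card_insert_of_notMem hw
    exact ih _ _ (h.step hs hw hsw) ⟨w, by simp⟩ (by omega) (by omega)

theorem pc_le {V : Type*} [Fintype V] [DecidableEq V] {G : SimpleGraph V} (hG : G.Connected)
    {d : ℕ} {S : Finset V} {k : ℕ} (h : EC G S k) (hne : S.Nonempty) (hS : S.card = k + d) :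
    ∃ c, G.IsPCColoring 2 (Fintype.card V - d) c :=
  EC.bound hG d (Fintype.card V - S.card) S k h hne hS
    (by have := Finset.card_le_univ S; omega)

theorem EC_single {V : Type*} (G : SimpleGraph V) (v : V) : EC G {v} 0 := by
  refine ⟨fun _ => 0, ?_, ?_⟩
  · intro u w h hu hw
    simp at hu hw
    subst hu hw
    exact absurd rfl h.ne
  · intro u hu w hw h
    simp at hu hw
    subst hu hw
    contradiction

theorem EC_tri {V : Type*} [DecidableEq V] {G : SimpleGraph V} {a b c : V}
    (h1 : G.Adj a b) (h2 : G.Adj b c) (h3 : G.Adj a c) : EC G {a, b, c} 1 := by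
  refine ⟨fun _ => 0, by simp, ?_⟩
  intro u hu w hw h
  refine PR.one ?_ hu hw
  simp only [Finset.mem_insert, Finset.mem_singleton] at hu hw
  have := h1.symm
  have := h2.symm
  have := h3.symm
  rcases hu with rfl | rfl | rfl <;> rcases hw with rfl | rfl | rfl <;> first | assumption | contradiction

theorem EC_c4 {V : Type*} [DecidableEq V] {G : SimpleGraph V} {a b c d : V}
    (h1 : G.Adj a b) (h2 : G.Adj b c) (h3 : G.Adj c d) (h4 : G.Adj d a) (hac : a ≠ c)
    (hbd : b ≠ d) : EC G {a, b, c, d} 2 := by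
  refine ⟨fun e => if e = s(a, b) ∨ e = s(c, d) then 0 else 1, ?_, ?_⟩
  · intros; dsimp only; split_ifs <;> omega
  set col : Sym2 V → ℕ := fun e => if e = s(a, b) ∨ e = s(c, d) then 0 else 1 with hcol
  have e1 : col s(a, b) = 0 := by simp [hcol]
  have e2 : col s(b, c) = 1 := by
    have := h1.ne; have := h2.ne; have := h3.ne
    simp [hcol]; grind
  have e3 : col s(c, d) = 0 := by simp [hcol]
  have p1 : PR G {a, b, c, d} col a c := PR.two h1 h2 hac (by simp [e1, e2]) (by simp) (by simp) (by simp)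
  have p2 : PR G {a, b, c, d} col b d := PR.two h2 h3 hbd (by simp [e3, e2]) (by simp) (by simp) (by simp)
  have p3 : PR G {a, b, c, d} col a b := PR.one h1 (by simp) (by simp)
  have p4 : PR G {a, b, c, d} col b c := PR.one h2 (by simp) (by simp)
  have p5 : PR G {a, b, c, d} col c d := PR.one h3 (by simp) (by simp)
  have p6 : PR G {a, b, c, d} col a d := PR.one h4.symm (by simp) (by simp)
  intro u hu w hw h
  simp only [Finset.mem_insert, Finset.mem_singleton] at hu hw
  rcases hu with rfl | rfl | rfl | rfl <;> rcases hw with rfl | rfl | rfl | rfl <;>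
    first | assumption | contradiction | (apply PR.symm'; assumption)

theorem EC_p5 {V : Type*} [DecidableEq V] {G : SimpleGraph V} {a b c d e : V}
    (h1 : G.Adj a b) (h2 : G.Adj b c) (h3 : G.Adj c d) (h4 : G.Adj d e) (hac : a ≠ c)
    (had : a ≠ d) (hae : a ≠ e) (hbd : b ≠ d) (hbe : b ≠ e) (hce : c ≠ e) :
    EC G {a, b, c, d, e} 3 := by
  refine ⟨fun x => if x = s(b, c) then 1 else if x = s(c, d) then 2 else 0, ?_, ?_⟩
  · intros; dsimp only; split_ifs <;> omega
  set col : Sym2 V → ℕ := fun x => if x = s(b, c) then 1 else if x = s(c, d) then 2 else 0 with hcol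
  have n1 := h1.ne
  have n2 := h2.ne
  have n3 := h3.ne
  have n4 := h4.ne
  have e1 : col s(a, b) = 0 := by simp [hcol]; grind
  have e2 : col s(b, c) = 1 := by simp [hcol]
  have e3 : col s(c, d) = 2 := by simp [hcol]; grind
  have e4 : col s(d, e) = 0 := by simp [hcol]; grind
  generalize hS : ({a, b, c, d, e} : Finset V) = S
  have ha : a ∈ S := by simp [← hS]
  have hb : b ∈ S := by simp [← hS]
  have hc : c ∈ S := by simp [← hS]
  have hd : d ∈ S := by simp [← hS]
  have he : e ∈ S := by simp [← hS]
  have p1 : PR G S col a b := PR.one h1 ha hb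
  have p2 : PR G S col b c := PR.one h2 hb hc
  have p3 : PR G S col c d := PR.one h3 hc hd
  have p4 : PR G S col d e := PR.one h4 hd he
  have p5 : PR G S col a c := PR.two h1 h2 hac (by omega) ha hb hc
  have p6 : PR G S col b d := PR.two h2 h3 hbd (by omega) hb hc hd
  have p7 : PR G S col c e := PR.two h3 h4 hce (by omega) hc hd he
  have p8 : PR G S col a d :=
    PR.three h1 h2 h3 hac had hbd (by omega) (by omega) (by omega) ha hb hc hd
  have p9 : PR G S col b e :=
    PR.three h2 h3 h4 hbd hbe hce (by omega) (by omega) (by omega) hb hc hd he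
  have p10 : PR G S col a e :=
    PR.four h1 h2 h3 h4 hac had hbd hae hbe hce (by omega) (by omega) (by omega) (by omega)
      (by omega) ha hb hc hd he
  intro u hu w hw h
  simp only [← hS, Finset.mem_insert, Finset.mem_singleton] at hu hw
  rcases hu with rfl | rfl | rfl | rfl | rfl <;> rcases hw with rfl | rfl | rfl | rfl | rfl <;>
    first | assumption | contradiction | (apply PR.symm'; assumption)

/-- `b`, `c` are the centers of a (possibly degenerate) double star. -/
def DS {V : Type*} (G : SimpleGraph V) (b c : V) : Prop :=
  G.Adj b c ∧ (∀ u v, G.Adj u v → u = b ∨ u = c ∨ v = b ∨ v = c) ∧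
    ∀ x, G.Adj x b → ¬ G.Adj x c

theorem DS.ne_color {V : Type*} {G : SimpleGraph V} {b c : V} (h : DS G b c) {col : Sym2 V → ℕ}
    {u v : V} (p : G.Walk u v) (hp : p.IsPath) (hd : p.IsDistProper 2 col) {e f : Sym2 V}
    (he : e ∈ p.edges) (hf : f ∈ p.edges) (hef : e ≠ f) : col e ≠ col f := by
  have hlen : p.length ≤ 3 := by
    by_contra! hl
    have a0 : G.Adj (p.getVert 0) (p.getVert 1) := p.adj_getVert_succ (i := 0) (by omega)
    have a1 : G.Adj (p.getVert 1) (p.getVert 2) := p.adj_getVert_succ (i := 1) (by omega)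
    have a2 : G.Adj (p.getVert 2) (p.getVert 3) := p.adj_getVert_succ (i := 2) (by omega)
    have a3 : G.Adj (p.getVert 3) (p.getVert 4) := p.adj_getVert_succ (i := 3) (by omega)
    have inj : ∀ i j, i ≤ 4 → j ≤ 4 → i ≠ j → p.getVert i ≠ p.getVert j := by
      intro i j hi hj hij heq
      exact hij (hp.getVert_injOn (by simp; omega) (by simp; omega) heq)
    have i01 := inj 0 1 (by omega) (by omega) (by omega)
    have i02 := inj 0 2 (by omega) (by omega) (by omega)
    have i03 := inj 0 3 (by omega) (by omega) (by omega)
    have i04 := inj 0 4 (by omega) (by omega) (by omega)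
    have i12 := inj 1 2 (by omega) (by omega) (by omega)
    have i13 := inj 1 3 (by omega) (by omega) (by omega)
    have i14 := inj 1 4 (by omega) (by omega) (by omega)
    have i23 := inj 2 3 (by omega) (by omega) (by omega)
    have i24 := inj 2 4 (by omega) (by omega) (by omega)
    have i34 := inj 3 4 (by omega) (by omega) (by omega)
    generalize p.getVert 0 = v0 at *
    generalize p.getVert 1 = v1 at *
    generalize p.getVert 2 = v2 at *
    generalize p.getVert 3 = v3 at *
    generalize p.getVert 4 = v4 at *
    obtain ⟨h1, h2, h3⟩ := h
    have c0 := h2 _ _ a0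
    have c1 := h2 _ _ a1
    have c2 := h2 _ _ a2
    have c3 := h2 _ _ a3
    have h4 := h3 v2
    have a1' := a1.symm
    clear h2 h3 inj hd hp
    grind
  obtain ⟨i, hi, rfl⟩ := List.getElem_of_mem he
  obtain ⟨j, hj, rfl⟩ := List.getElem_of_mem hf
  have hi' := hi
  have hj' := hj
  rw [Walk.length_edges] at hi' hj'
  rcases lt_trichotomy i j with hij | hij | hij
  · exact hd i j hi hj hij (by omega)
  · subst hij; exact absurd rfl hef
  · exact (hd j i hj hi hij (by omega)).symm

theorem mem_edges_of_cut {V : Type*} {G : SimpleGraph V} {u v : V} (p : G.Walk u v) (A : Set V)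
    (hu : u ∈ A) (hv : v ∉ A) (e : Sym2 V)
    (h : ∀ x ∈ A, ∀ y, y ∉ A → G.Adj x y → s(x, y) = e) : e ∈ p.edges := by
  obtain ⟨d, hd, h1, h2⟩ := p.exists_boundary_dart A hu hv
  rw [← h _ h1 _ h2 d.adj]
  exact List.mem_map_of_mem hd

theorem DS.lower {V : Type*} [Fintype V] {G : SimpleGraph V} (hG : G.Connected) {b c : V}
    (h : DS G b c) {k : ℕ} {col : Sym2 V → ℕ} (hc : G.IsPCColoring 2 k col) :
    Fintype.card V - 1 ≤ k := by
  classical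
  obtain ⟨hk, hp⟩ := hc
  have h' := h
  obtain ⟨h1, h2, h3⟩ := h'
  have hbc := h1.ne
  let par : V → V := fun x => if G.Adj x b then b else c
  have hpar : ∀ x, x ≠ b → G.Adj x (par x) := by
    intro x hx
    simp only [par]
    split_ifs with hb
    · exact hb
    · obtain ⟨s, hs, w, hw, hsw⟩ := exists_out hG {x} (a := x) (b := b) rfl (by simpa using hx.symm)
      simp at hs
      subst hs
      have := h2 _ _ hsw
      have : s ≠ c := by rintro rfl; exact hb h1.symm
      grind
  have huniq : ∀ x y, x ≠ b → x ≠ c → G.Adj x y → y = par x := by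
    intro x y hxb hxc hxy
    have := h2 _ _ hxy
    have := h3 x
    simp only [par]
    grind
  have hparc : par c = b := by simp [par, h1.symm]
  -- leaf edges lie on the walks
  have leaf : ∀ x y (p : G.Walk x y), x ≠ y → x ≠ b → x ≠ c → s(x, par x) ∈ p.edges := by
    intro x y p hxy hxb hxc
    refine mem_edges_of_cut p {x} rfl (by simpa using hxy.symm) _ ?_
    rintro z hz w - hzw
    simp at hz
    subst hz
    rw [huniq z w hxb hxc hzw]
  have leaf' : ∀ x y (p : G.Walk x y), x ≠ y → y ≠ b → y ≠ c → s(y, par y) ∈ p.edges := by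
    intro x y p hxy hxb hxc
    have := leaf y x p.reverse hxy.symm hxb hxc
    simpa using this
  let A : Set V := {z | z = b ∨ (G.Adj z b ∧ z ≠ c)}
  have cut : ∀ x ∈ A, ∀ y, y ∉ A → G.Adj x y → s(x, y) = s(c, b) := by
    intro x hx y hy hxy
    simp only [A, Set.mem_ofPred_eq] at hx hy
    have := h2 _ _ hxy
    have := h3 x
    have := hxy.symm
    have : x = b ∧ y = c := by grind
    rw [this.1, this.2, Sym2.eq_swap]
  have hne : ∀ x y, x ≠ b → y ≠ b → x ≠ y → s(x, par x) ≠ s(y, par y) := by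
    intro x y hx hy hxy heq
    have := hpar x hx
    have := hpar y hy
    have := huniq x y hx
    simp only [par] at *
    simp only [Sym2.eq_iff] at heq
    grind
  have hcy : ∀ y, y ≠ b → y ≠ c → col s(c, par c) ≠ col s(y, par y) := by
    intro y hyb hyc
    by_cases hy : G.Adj y b
    · obtain ⟨p, hp1, hp2⟩ := hp y c hyc
      refine h.ne_color p hp1 hp2 ?_ (leaf y c p hyc hyb hyc) (hne _ _ hbc.symm hyb hyc.symm)
      rw [hparc]
      exact mem_edges_of_cut p A (by simp [A, hy, hyc]) (by simp [A, hbc.symm]) _ cut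
    · obtain ⟨p, hp1, hp2⟩ := hp b y hyb.symm
      refine h.ne_color p hp1 hp2 ?_ (leaf' b y p hyb.symm hyb hyc) (hne _ _ hbc.symm hyb hyc.symm)
      rw [hparc]
      exact mem_edges_of_cut p A (by simp [A]) (by simp [A, hy, hyb]) _ cut
  have hinj : ∀ x y, x ≠ b → y ≠ b → x ≠ y → col s(x, par x) ≠ col s(y, par y) := by
    intro x y hx hy hxy
    by_cases hxc : x = c
    · subst hxc; exact hcy y hy hxy.symm
    by_cases hyc : y = c
    · subst hyc; exact (hcy x hx hxy).symm
    obtain ⟨p, hp1, hp2⟩ := hp x y hxy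
    exact h.ne_color p hp1 hp2 (leaf _ _ p hxy hx hxc) (leaf' _ _ p hxy hy hyc) (hne _ _ hx hy hxy)
  have := Finset.card_le_card_of_injOn (s := Finset.univ.erase b) (t := Finset.range k)
    (fun x => col s(x, par x)) (by
      intro x hx
      simp only [Finset.coe_erase, Finset.coe_univ, Set.mem_sdiff, Set.mem_singleton_iff] at hx
      simpa using hk _ (hpar x hx.2)) (by
      intro x hx y hy hxy
      simp only [Finset.coe_erase, Finset.coe_univ, Set.mem_sdiff, Set.mem_singleton_iff] at hx hy
      by_contra hne'
      exact hinj x y hx.2 hy.2 hne' hxy)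
  simpa using this

theorem DS.pc_eq {V : Type*} [Fintype V] {G : SimpleGraph V} (hG : G.Connected) {b c : V}
    (h : DS G b c) : G.pc 2 = Fintype.card V - 1 := by
  classical
  have hex := pc_le hG (d := 1) (EC_single G b) (by simp) (by simp)
  apply le_antisymm
  · exact Nat.sInf_le hex
  · obtain ⟨col, hc⟩ := Nat.sInf_mem (s := {k | ∃ c : Sym2 V → ℕ, G.IsPCColoring 2 k c}) ⟨_, hex⟩
    exact h.lower hG hc

theorem DS_star {V : Type*} [Fintype V] {G : SimpleGraph V} (hn : 2 ≤ Fintype.card V)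
    (f : G ≃g _root_.starGraph (Fintype.card V)) : ∃ b c, DS G b c := by
  have hadj : ∀ u v, G.Adj u v ↔ (u ≠ v ∧ ((f u).val = 0 ∨ (f v).val = 0)) := by
    intro u v
    rw [← f.map_adj_iff]
    have : f u = f v ↔ u = v := f.injective.eq_iff
    simp [_root_.starGraph]
    intro _
    exact not_congr this
  have hb : f (f.symm ⟨0, by omega⟩) = ⟨0, by omega⟩ := f.apply_symm_apply _
  have hc : f (f.symm ⟨1, by omega⟩) = ⟨1, by omega⟩ := f.apply_symm_apply _
  refine ⟨f.symm ⟨0, by omega⟩, f.symm ⟨1, by omega⟩, ?_⟩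
  generalize f.symm ⟨0, by omega⟩ = b at *
  generalize f.symm ⟨1, by omega⟩ = c at *
  have hz : ∀ u, (f u).val = 0 → u = b := by
    intro u hu
    apply f.injective
    rw [hb]; ext; exact hu
  refine ⟨?_, ?_, ?_⟩
  · rw [hadj]
    refine ⟨?_, by simp [hb]⟩
    rintro rfl
    rw [hb] at hc
    simp at hc
  · intro u v huv
    rw [hadj] at huv
    grind
  · intro x h1 h2
    rw [hadj] at h1 h2
    rcases h2.2 with h | h
    · exact h1.1 (hz _ h)
    · simp [hc] at h

theorem DS_double {V : Type*} {G : SimpleGraph V} {m n : ℕ}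
    (f : G ≃g doubleStar m n) : ∃ b c, DS G b c := by
  refine ⟨f.symm (Sum.inl 0), f.symm (Sum.inl 1), ?_, ?_, ?_⟩
  · rw [f.symm.map_adj_iff]; simp [doubleStar]
  · intro u v huv
    replace huv : (doubleStar m n).Adj (f u) (f v) := f.map_adj_iff.2 huv
    have : ∀ x y, x = f.symm y ↔ f x = y := fun x y => by
      constructor
      · rintro rfl; simp
      · rintro rfl; simp
    simp only [this]
    simp [doubleStar] at huv
    rcases huv with ⟨-, (h | h | h) | (h | h | h)⟩ <;>
      first
      | exact Or.inl h.1
      | exact Or.inr (Or.inl h.1)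
      | exact Or.inr (Or.inr (Or.inl h.1))
      | exact Or.inr (Or.inr (Or.inr h.1))
  · intro x
    rw [← f.map_adj_iff, ← f.map_adj_iff]
    simp only [RelIso.apply_symm_apply]
    generalize f x = y
    rcases y with y | y | y
    · fin_cases y <;> simp [doubleStar]
    · simp [doubleStar]
    · simp [doubleStar]

theorem DS.cover {V : Type*} {G : SimpleGraph V} (hG : G.Connected) {b c : V} (h : DS G b c) :
    ∀ x, x = b ∨ x = c ∨ G.Adj b x ∨ G.Adj c x := by
  intro x
  obtain ⟨h1, h2, h3⟩ := h
  by_cases hx : x = b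
  · exact Or.inl hx
  obtain ⟨s, hs, w, hw, hsw⟩ := exists_out hG {x} (a := x) (b := b) rfl
    (by simpa using (Ne.symm hx))
  simp at hs
  subst hs
  have := h2 _ _ hsw
  have := hsw.symm
  grind

theorem star_of {V : Type*} [Fintype V] {G : SimpleGraph V} (b : V)
    (h : ∀ u v, G.Adj u v ↔ (u ≠ v ∧ (u = b ∨ v = b))) :
    Nonempty (G ≃g _root_.starGraph (Fintype.card V)) := by
  classical
  have hpos : 0 < Fintype.card V := Fintype.card_pos_iff.2 ⟨b⟩
  let e0 := Fintype.equivFin V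
  let e : V ≃ Fin (Fintype.card V) := e0.trans (Equiv.swap (e0 b) ⟨0, hpos⟩)
  have he : e b = ⟨0, hpos⟩ := by simp [e]
  have hz : ∀ u, (e u).val = 0 ↔ u = b := by
    intro u
    constructor
    · intro hu
      apply e.injective
      rw [he]; ext; exact hu
    · rintro rfl; simp [he]
  refine ⟨⟨e, ?_⟩⟩
  intro u v
  rw [h]
  simp [_root_.starGraph, hz]

theorem DS.classify {V : Type*} [Fintype V] {G : SimpleGraph V} (hG : G.Connected) {b c : V}
    (h : DS G b c) : Nonempty (G ≃g _root_.starGraph (Fintype.card V)) ∨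
        ∃ n₁ n₂ : ℕ, 1 ≤ n₁ ∧ 1 ≤ n₂ ∧ Nonempty (G ≃g doubleStar n₁ n₂) := by
  classical
  have hcov := h.cover hG
  obtain ⟨h1, h2, h3⟩ := h
  have hbc := h1.ne
  by_cases hB : ∀ x, G.Adj b x → x = c
  · left
    apply star_of c
    intro u v
    constructor
    · intro huv
      have := h2 _ _ huv
      have := huv.symm
      have := huv.ne
      grind
    · rintro ⟨hne, rfl | rfl⟩
      · have := hcov v
        have := h1.symm
        grind
      · have := hcov u
        have := h1.symm
        rw [G.adj_comm]
        grind
  by_cases hC : ∀ x, G.Adj c x → x = b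
  · left
    apply star_of b
    intro u v
    constructor
    · intro huv
      have := h2 _ _ huv
      have := huv.symm
      have := huv.ne
      grind
    · rintro ⟨hne, rfl | rfl⟩
      · have := hcov v
        grind
      · have := hcov u
        rw [G.adj_comm]
        grind
  right
  push Not at hB hC
  obtain ⟨a, ha, hac⟩ := hB
  obtain ⟨d, hd, hdb⟩ := hC
  let X := {x // G.Adj b x ∧ x ≠ c}
  let Y := {x // G.Adj c x ∧ x ≠ b}
  let eX : Fin (Fintype.card X) ≃ X := (Fintype.equivFin X).symm
  let eY : Fin (Fintype.card Y) ≃ Y := (Fintype.equivFin Y).symm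
  refine ⟨Fintype.card X, Fintype.card Y, Fintype.card_pos_iff.2 ⟨⟨a, ha, hac⟩⟩,
    Fintype.card_pos_iff.2 ⟨⟨d, hd, hdb⟩⟩, ?_⟩
  let g : Fin 2 ⊕ (X ⊕ Y) → V := Sum.elim (fun i => if i = 0 then b else c)
    (Sum.elim (fun x => x.1) (fun y => y.1))
  have h3' : ∀ x, G.Adj b x → ¬ G.Adj c x := fun x hx hy => h3 x hx.symm hy.symm
  have gbij : Function.Bijective g := by
    constructor
    · rintro (i | ⟨x, hx, hx'⟩ | ⟨y, hy, hy'⟩) (j | ⟨z, hz, hz'⟩ | ⟨w, hw, hw'⟩) hij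
      · fin_cases i <;> fin_cases j <;> simp [g, hbc, hbc.symm] at hij ⊢
      · fin_cases i <;> simp [g] at hij <;> subst hij <;>
          first | contradiction | (exfalso; exact G.irrefl (by assumption))
      · fin_cases i <;> simp [g] at hij <;> subst hij <;>
          first | contradiction | (exfalso; exact G.irrefl (by assumption))
      · fin_cases j <;> simp [g] at hij <;> subst hij <;>
          first | contradiction | (exfalso; exact G.irrefl (by assumption))
      · simp [g] at hij; subst hij; rfl
      · simp [g] at hij; subst hij; exact absurd hw (h3' _ hx)
      · fin_cases j <;> simp [g] at hij <;> subst hij <;>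
          first | contradiction | (exfalso; exact G.irrefl (by assumption))
      · simp [g] at hij; subst hij; exact absurd hy (h3' _ hz)
      · simp [g] at hij; subst hij; rfl
    · intro x
      by_cases hxb : x = b
      · exact ⟨Sum.inl 0, by simp [g, hxb]⟩
      by_cases hxc : x = c
      · exact ⟨Sum.inl 1, by simp [g, hxc]⟩
      rcases hcov x with h | h | h | h
      · contradiction
      · contradiction
      · exact ⟨Sum.inr (Sum.inl ⟨x, h, hxc⟩), rfl⟩
      · exact ⟨Sum.inr (Sum.inr ⟨x, h, hxb⟩), rfl⟩
  let E : Fin 2 ⊕ (Fin (Fintype.card X) ⊕ Fin (Fintype.card Y)) ≃ V :=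
    (Equiv.sumCongr (Equiv.refl _) (Equiv.sumCongr eX eY)).trans (Equiv.ofBijective g gbij)
  have E0 : E (Sum.inl 0) = b := by simp [E, g]
  have E1 : E (Sum.inl 1) = c := by simp [E, g]
  have EX : ∀ i, E (Sum.inr (Sum.inl i)) = (eX i).1 := fun i => rfl
  have EY : ∀ i, E (Sum.inr (Sum.inr i)) = (eY i).1 := fun i => rfl
  have bb : ¬ G.Adj b b := G.irrefl
  have cc : ¬ G.Adj c c := G.irrefl
  have key : ∀ u v, G.Adj (E u) (E v) ↔ (doubleStar _ _).Adj u v := by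
    have xx : ∀ u v : X, ¬ G.Adj u.1 v.1 := by
      rintro ⟨u, hu, hu'⟩ ⟨v, hv, hv'⟩ huv
      have := h2 _ _ huv
      grind
    have yy : ∀ u v : Y, ¬ G.Adj u.1 v.1 := by
      rintro ⟨u, hu, hu'⟩ ⟨v, hv, hv'⟩ huv
      have := h2 _ _ huv
      grind
    have xy : ∀ (u : X) (v : Y), ¬ G.Adj u.1 v.1 := by
      rintro ⟨u, hu, hu'⟩ ⟨v, hv, hv'⟩ huv
      have := h2 _ _ huv
      grind
    have yx : ∀ (u : Y) (v : X), ¬ G.Adj u.1 v.1 := fun u v h => xy v u h.symm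
    have bx : ∀ u : X, G.Adj b u.1 := fun u => u.2.1
    have cy : ∀ u : Y, G.Adj c u.1 := fun u => u.2.1
    have cx : ∀ u : X, ¬ G.Adj c u.1 := fun u => h3' _ u.2.1
    have by' : ∀ u : Y, ¬ G.Adj b u.1 := fun u h => h3' _ h u.2.1
    have bx' : ∀ u : X, G.Adj u.1 b := fun u => u.2.1.symm
    have cy' : ∀ u : Y, G.Adj u.1 c := fun u => u.2.1.symm
    have cx' : ∀ u : X, ¬ G.Adj u.1 c := fun u h => cx u h.symm
    have by'' : ∀ u : Y, ¬ G.Adj u.1 b := fun u h => by' u h.symm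
    have hcb := h1.symm
    rintro (i | x | y) (j | z | w)
    · fin_cases i <;> fin_cases j <;> simp [doubleStar, E0, E1, h1, hcb]
    · fin_cases i <;> simp [doubleStar, E0, E1, EX, bx, cx]
    · fin_cases i <;> simp [doubleStar, E0, E1, EY, by', cy]
    · fin_cases j <;> simp [doubleStar, E0, E1, EX, bx', cx']
    · simp [doubleStar, EX, xx]
    · simp [doubleStar, EX, EY, xy]
    · fin_cases j <;> simp [doubleStar, E0, E1, EY, by'', cy']
    · simp [doubleStar, EX, EY, yx]
    · simp [doubleStar, EY, yy]
  exact ⟨RelIso.symm ⟨E, key _ _⟩⟩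

/-- No small good configuration forces a double star. -/
theorem DS_of {V : Type*} {G : SimpleGraph V} (hG : G.Connected) [Nontrivial V]
    (t : ∀ a b c, G.Adj a b → G.Adj b c → ¬ G.Adj a c)
    (q : ∀ a b c d, G.Adj a b → G.Adj b c → G.Adj c d → a ≠ c → b ≠ d → ¬ G.Adj d a)
    (r : ∀ a b c d e, G.Adj a b → G.Adj b c → G.Adj c d → G.Adj d e → a ≠ c → a ≠ d → a ≠ e →
      b ≠ d → b ≠ e → ¬ c ≠ e) : ∃ b c, DS G b c := by
  have sy : ∀ u v, G.Adj u v → G.Adj v u := fun u v h => h.symm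
  have irr : ∀ u v, G.Adj u v → u ≠ v := fun u v h => h.ne
  by_cases hP : ∃ a b c d, G.Adj a b ∧ G.Adj b c ∧ G.Adj c d ∧ a ≠ c ∧ b ≠ d
  · obtain ⟨a, b, c, d, hab, hbc, hcd, hac, hbd⟩ := hP
    have had : a ≠ d := by rintro rfl; exact t _ _ _ hab hbc hcd.symm
    have hB : ∀ x y, G.Adj b x → x ≠ c → G.Adj x y → y = b := by
      intro x y hbx hxc hxy
      by_contra hyb
      have hyc : y ≠ c := by rintro rfl; exact t _ _ _ hbx hxy hbc
      have hxd : x ≠ d := by rintro rfl; exact t _ _ _ hbc hcd hbx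
      have hyd : y ≠ d := by rintro rfl; exact q _ _ _ _ hbx.symm hbc hcd hxc hbd hxy.symm
      exact r y x b c d hxy.symm hbx.symm hbc hcd hyb hyc hyd hxc hxd hbd
    have hC : ∀ x y, G.Adj c x → x ≠ b → G.Adj x y → y = c := by
      intro x y hcx hxb hxy
      by_contra hyc
      have hyb : y ≠ b := by rintro rfl; exact t _ _ _ hcx hxy hbc.symm
      have hxa : x ≠ a := by rintro rfl; exact t _ _ _ hab hbc hcx.symm
      have hya : y ≠ a := by rintro rfl; exact q _ _ _ _ hcx.symm hbc.symm hab.symm hxb hac.symm hxy.symm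
      exact r y x c b a hxy.symm hcx.symm hbc.symm hab.symm hyc hyb hya hxb hxa hac.symm
    have hcov : ∀ x, x = b ∨ x = c ∨ G.Adj b x ∨ G.Adj c x := by
      intro x
      by_contra hx
      obtain ⟨s, hs, w, hw, hsw⟩ := exists_out hG {x | x = b ∨ x = c ∨ G.Adj b x ∨ G.Adj c x}
        (a := b) (b := x) (by simp) hx
      simp only [Set.mem_ofPred_eq] at hs hw
      grind
    refine ⟨b, c, hbc, ?_, ?_⟩
    · intro u v huv
      have := hcov u
      grind
    · intro x hxb hxc
      exact t _ _ _ hxb hbc hxc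
  · have hP' : ∀ a b c d, G.Adj a b → G.Adj b c → G.Adj c d → a ≠ c → b = d := by
      intro a b c d h1 h2 h3 h4
      by_contra h5
      exact hP ⟨a, b, c, d, h1, h2, h3, h4, h5⟩
    obtain ⟨b, c, hbc, hmax⟩ : ∃ b c, G.Adj b c ∧
        ((∃ a, G.Adj b a ∧ a ≠ c) ∨ ∀ x y z, G.Adj x y → G.Adj x z → y = z) := by
      by_cases h : ∀ x y z, G.Adj x y → G.Adj x z → y = z
      · obtain ⟨x, y, hxy⟩ := exists_pair_ne V
        obtain ⟨s, -, w, -, hsw⟩ := exists_out hG {x} (a := x) (b := y) rfl (by simpa using hxy.symm)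
        exact ⟨s, w, hsw, Or.inr h⟩
      · push Not at h
        obtain ⟨x, y, z, hy, hz, hyz⟩ := h
        exact ⟨x, y, hy, Or.inl ⟨z, hz, hyz.symm⟩⟩
    have hB : ∀ x y, G.Adj b x → G.Adj x y → y = b := by
      intro x y hbx hxy
      rcases hmax with ⟨a, hba, hac⟩ | hmax
      · by_cases hxa : x = a
        · subst hxa
          exact (hP' c b x y hbc.symm hbx hxy hac.symm).symm
        · exact (hP' a b x y hba.symm hbx hxy (Ne.symm hxa)).symm
      · exact hmax x y b hxy hbx.symm
    have hcov : ∀ x, x = b ∨ G.Adj b x := by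
      intro x
      by_contra hx
      obtain ⟨s, hs, w, hw, hsw⟩ := exists_out hG {x | x = b ∨ G.Adj b x}
        (a := b) (b := x) (by simp) hx
      simp only [Set.mem_ofPred_eq] at hs hw
      grind
    refine ⟨b, c, hbc, ?_, ?_⟩
    · intro u v huv
      have := hcov u
      grind
    · intro x hxb hxc
      exact t _ _ _ hxb hbc hxc

/-- For a nontrivial connected graph `G` on `n ≥ 2` vertices, `pc_{1,2}(G) = n - 1`
if and only if `G` is a star `S_n` or a double star `T(n₁,n₂)` with `n₁, n₂ ≥ 1`. -/
theorem pc_eq_card_sub_one_iff {V : Type*} [Fintype V] (G : SimpleGraph V)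
    (hG : G.Connected) (hn : 2 ≤ Fintype.card V) :
    G.pc 2 = Fintype.card V - 1 ↔
      (Nonempty (G ≃g _root_.starGraph (Fintype.card V)) ∨
        ∃ n₁ n₂ : ℕ, 1 ≤ n₁ ∧ 1 ≤ n₂ ∧ Nonempty (G ≃g doubleStar n₁ n₂)) := by
  classical
  constructor
  · intro hpc
    have : Nontrivial V := Fintype.one_lt_card_iff_nontrivial.1 (by omega)
    have bad : ∀ (S : Finset V) (k : ℕ), EC G S k → S.Nonempty → S.card = k + 2 → False := by
      intro S k h hne hS
      have : G.pc 2 ≤ Fintype.card V - 2 := Nat.sInf_le (pc_le hG h hne hS)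
      omega
    obtain ⟨b, c, h⟩ := DS_of hG
      (by
        intro a b c h1 h2 h3
        refine bad _ _ (EC_tri h1 h2 h3) (by simp) ?_
        have := h1.ne; have := h2.ne; have := h3.ne
        simp [*])
      (by
        intro a b c d h1 h2 h3 hac hbd h4
        refine bad _ _ (EC_c4 h1 h2 h3 h4 hac hbd) (by simp) ?_
        have := h1.ne; have := h2.ne; have := h3.ne; have := h4.symm.ne
        simp [*])
      (by
        intro a b c d e h1 h2 h3 h4 hac had hae hbd hbe hce
        refine bad _ _ (EC_p5 h1 h2 h3 h4 hac had hae hbd hbe hce) (by simp) ?_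
        have := h1.ne; have := h2.ne; have := h3.ne; have := h4.ne
        simp [*])
    exact h.classify hG
  · rintro (⟨⟨f⟩⟩ | ⟨n₁, n₂, -, -, ⟨f⟩⟩)
    · obtain ⟨b, c, h⟩ := DS_star hn f
      exact h.pc_eq hG
    · obtain ⟨b, c, h⟩ := DS_double f
      exact h.pc_eq hG
end

section
/- Let n₁, n₂ ≥ 1 and let T¹(n₁,n₂) be the tree obtained from the double star T(n₁,n₂) by subdividing one pendant edge once (equivalently, replacing one pendant edge by a path of length 2). Then T¹(n₁,n₂) has n = n₁ + n₂ + 3 vertices and pc_{1,2}(T¹(n₁,n₂)) = n − 2. -/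
open SimpleGraph

/-- The tree `T¹(n₁, n₂)` obtained from the double star `T(n₁, n₂)` by subdividing one
pendant edge once: two adjacent centers `inl 0` and `inl 1`, with `n₁` and `n₂` pendant
leaves respectively, and one extra vertex (`inr ()`) attached to the first leaf
of the second center (so that leaf's edge to the center is subdivided into a path
of length 2 ending at the new pendant vertex). -/
def doubleStarSub (n₁ n₂ : ℕ) : SimpleGraph ((Fin 2 ⊕ (Fin n₁ ⊕ Fin n₂)) ⊕ Unit) :=
  SimpleGraph.fromRel (fun a b =>
    (a = Sum.inl (Sum.inl 0) ∧ b = Sum.inl (Sum.inl 1)) ∨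
    (a = Sum.inl (Sum.inl 0) ∧ ∃ i : Fin n₁, b = Sum.inl (Sum.inr (Sum.inl i))) ∨
    (a = Sum.inl (Sum.inl 1) ∧ ∃ j : Fin n₂, b = Sum.inl (Sum.inr (Sum.inr j))) ∨
    (∃ j : Fin n₂, j.val = 0 ∧ a = Sum.inl (Sum.inr (Sum.inr j)) ∧ b = Sum.inr ()))

namespace DSS

abbrev VV (n₁ n₂ : ℕ) := (Fin 2 ⊕ (Fin n₁ ⊕ Fin n₂)) ⊕ Unit

variable {n₁ n₂ : ℕ}

abbrev c0 : VV n₁ n₂ := Sum.inl (Sum.inl 0)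
abbrev c1 : VV n₁ n₂ := Sum.inl (Sum.inl 1)
abbrev va (i : Fin n₁) : VV n₁ n₂ := Sum.inl (Sum.inr (Sum.inl i))
abbrev vb (j : Fin n₂) : VV n₁ n₂ := Sum.inl (Sum.inr (Sum.inr j))
abbrev vw : VV n₁ n₂ := Sum.inr ()

/-- directed adjacency -/
inductive R : VV n₁ n₂ → VV n₁ n₂ → Prop
  | e : R c0 c1
  | e' : R c1 c0
  | a (i) : R c0 (va i)
  | a' (i) : R (va i) c0
  | b (j) : R c1 (vb j)
  | b' (j) : R (vb j) c1
  | f (j : Fin n₂) (h : j.val = 0) : R (vb j) vw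
  | f' (j : Fin n₂) (h : j.val = 0) : R vw (vb j)

lemma adj_iff (x y : VV n₁ n₂) : (doubleStarSub n₁ n₂).Adj x y ↔ R x y := by
  unfold doubleStarSub
  rw [SimpleGraph.fromRel_adj]
  constructor
  · rintro ⟨-, (⟨rfl, rfl⟩ | ⟨rfl, i, rfl⟩ | ⟨rfl, i, rfl⟩ | ⟨j, h, rfl, rfl⟩) |
      (⟨rfl, rfl⟩ | ⟨rfl, i, rfl⟩ | ⟨rfl, i, rfl⟩ | ⟨j, h, rfl, rfl⟩)⟩
    · exact R.e
    · exact R.a _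
    · exact R.b _
    · exact R.f _ h
    · exact R.e'
    · exact R.a' _
    · exact R.b' _
    · exact R.f' _ h
  · intro h
    cases h <;> simp_all [c0, c1, va, vb, vw]

lemma bridge_of {V : Type*} {G : SimpleGraph V} (S : V → Prop) (u v : V)
    (hu : ¬ S u) (hv : S v)
    (h : ∀ x y, G.Adj x y → ¬ S x → S y → x = u ∧ y = v) : G.IsBridge s(u, v) := by
  rw [SimpleGraph.isBridge_iff]
  rintro ⟨p⟩
  have key : ∀ x y, (p : (G.deleteEdges {s(u, v)}).Walk x y) → ¬ S x → ¬ S y := by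
    intro x y p
    induction p with
    | nil => exact id
    | cons hxy p ih =>
      intro hx
      apply ih
      intro hy
      rw [SimpleGraph.deleteEdges_adj] at hxy
      obtain ⟨rfl, rfl⟩ := h _ _ hxy.1 hx hy
      exact hxy.2 rfl
  exact key _ _ p hu hv

lemma acyc : (doubleStarSub n₁ n₂).IsAcyclic := by
  rw [SimpleGraph.isAcyclic_iff_forall_adj_isBridge]
  intro v w h
  rw [adj_iff] at h
  have e : (doubleStarSub n₁ n₂).IsBridge s(c0, c1) := by
    refine bridge_of (fun x => x = c1 ∨ x = vw ∨ ∃ j, x = vb j) _ _ (by simp) (by simp) ?_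
    intro x y hxy
    rw [adj_iff] at hxy
    cases hxy <;> simp
  have a (i) : (doubleStarSub n₁ n₂).IsBridge s(c0, va i) := by
    refine bridge_of (fun x => x = va i) _ _ (by simp) (by simp) ?_
    intro x y hxy
    rw [adj_iff] at hxy
    cases hxy <;> simp
  have f (j : Fin n₂) (hj : j.val = 0) : (doubleStarSub n₁ n₂).IsBridge s(vb j, vw) := by
    refine bridge_of (fun x => x = vw) _ _ (by simp) (by simp) ?_
    intro x y hxy
    rw [adj_iff] at hxy
    cases hxy <;> simp [Fin.ext_iff] <;> omega
  have b (j : Fin n₂) : (doubleStarSub n₁ n₂).IsBridge s(c1, vb j) := by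
    refine bridge_of (fun x => x = vb j ∨ (x = vw ∧ j.val = 0)) _ _ (by simp) (by simp) ?_
    intro x y hxy
    rw [adj_iff] at hxy
    cases hxy <;> simp [Fin.ext_iff] <;> omega
  cases h with
  | e => exact e
  | e' => rw [Sym2.eq_swap]; exact e
  | a i => exact a i
  | a' i => rw [Sym2.eq_swap]; exact a i
  | b i => exact b i
  | b' i => rw [Sym2.eq_swap]; exact b i
  | f i h => exact f i h
  | f' i h => rw [Sym2.eq_swap]; exact f i h

lemma ne2 {V : Type*} {G : SimpleGraph V} (hG : G.IsAcyclic) {k : ℕ} {c : Sym2 V → ℕ}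
    (hc : G.IsPCColoring 2 k c) {x y z : V} (h1 : G.Adj x y) (h2 : G.Adj y z) (hxz : x ≠ z) :
    c s(x, y) ≠ c s(y, z) := by
  obtain ⟨p, hp, hd⟩ := hc.2 x z hxz
  have hq : (Walk.cons h1 (Walk.cons h2 Walk.nil)).IsPath := by
    simp [h1.ne, h2.ne, hxz]
  have := congrArg Subtype.val (hG.path_unique ⟨p, hp⟩ ⟨_, hq⟩)
  simp only at this
  subst this
  simpa using hd 0 1 (by simp) (by simp) (by simp) (by simp)

lemma ne3 {V : Type*} {G : SimpleGraph V} (hG : G.IsAcyclic) {k : ℕ} {c : Sym2 V → ℕ}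
    (hc : G.IsPCColoring 2 k c) {x y z t : V} (h1 : G.Adj x y) (h2 : G.Adj y z)
    (h3 : G.Adj z t) (hxz : x ≠ z) (hxt : x ≠ t) (hyt : y ≠ t) :
    c s(x, y) ≠ c s(z, t) := by
  obtain ⟨p, hp, hd⟩ := hc.2 x t hxt
  have hq : (Walk.cons h1 (Walk.cons h2 (Walk.cons h3 Walk.nil))).IsPath := by
    simp [h1.ne, h2.ne, h3.ne, hxz, hxt, hyt]
  have := congrArg Subtype.val (hG.path_unique ⟨p, hp⟩ ⟨_, hq⟩)
  simp only at this
  subst this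
  simpa using hd 0 2 (by simp) (by simp) (by simp) (by simp)

def E : Option (Fin n₁ ⊕ Fin n₂) → Sym2 (VV n₁ n₂)
  | none => s(c0, c1)
  | some (Sum.inl i) => s(va i, c0)
  | some (Sum.inr j) => s(c1, vb j)

lemma lower {k : ℕ} {c : Sym2 (VV n₁ n₂) → ℕ}
    (hc : (doubleStarSub n₁ n₂).IsPCColoring 2 k c) : n₁ + n₂ + 1 ≤ k := by
  have hE : ∀ o : Option (Fin n₁ ⊕ Fin n₂), c (E o) < k := by
    intro o
    apply hc.1
    rcases o with _ | i | j
    · exact (adj_iff _ _).2 R.e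
    · exact (adj_iff _ _).2 (R.a' i)
    · exact (adj_iff _ _).2 (R.b j)
  have e := (adj_iff (n₁ := n₁) (n₂ := n₂) _ _).2 R.e
  have a (i) := (adj_iff (n₁ := n₁) (n₂ := n₂) _ _).2 (R.a i)
  have b (i) := (adj_iff (n₁ := n₁) (n₂ := n₂) _ _).2 (R.b i)
  have hea (i) : c s(va i, c0) ≠ c s(c0, c1) := ne2 acyc hc (a i).symm e (by simp)
  have heb (i) : c s(c0, c1) ≠ c s(c1, vb i) := ne2 acyc hc e (b i) (by simp)
  have hab (i j) : c s(va i, c0) ≠ c s(c1, vb j) :=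
    ne3 acyc hc (a i).symm e (b j) (by simp) (by simp) (by simp)
  have haa (i j) (h : i ≠ j) : c s(va i, c0) ≠ c s(va j, c0) := by
    rw [Sym2.eq_swap (a := va j)]
    exact ne2 acyc hc (a i).symm (a j) (by simpa using h)
  have hbb (i j) (h : i ≠ j) : c s(c1, vb i) ≠ c s(c1, vb j) := by
    rw [Sym2.eq_swap (b := vb i)]
    exact ne2 acyc hc (b i).symm (b j) (by simpa using h)
  have hinj : Function.Injective (fun o : Option (Fin n₁ ⊕ Fin n₂) => (⟨c (E o), hE o⟩ : Fin k)) := by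
    intro o o' h
    simp only [Fin.mk.injEq] at h
    by_contra hne
    rcases o with _ | i | i <;> rcases o' with _ | j | j <;> simp only [E] at h
    · exact hne rfl
    · exact hea _ h.symm
    · exact heb _ h
    · exact hea _ h
    · exact haa i j (by rintro rfl; exact hne rfl) h
    · exact hab _ _ h
    · exact heb _ h.symm
    · exact hab _ _ h.symm
    · exact hbb i j (by rintro rfl; exact hne rfl) h
  simpa using Fintype.card_le_of_injective _ hinj

def g : VV n₁ n₂ → ℤ
  | Sum.inl (Sum.inl _) => 0
  | Sum.inl (Sum.inr (Sum.inl i)) => 1 + i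
  | Sum.inl (Sum.inr (Sum.inr j)) => n₁ + 1 + j
  | Sum.inr _ => - n₁

def col : Sym2 (VV n₁ n₂) → ℕ :=
  Sym2.lift ⟨fun x y => (g x + g y).toNat, fun x y => by simp only [add_comm]⟩

lemma conn (h₂ : 1 ≤ n₂) (x : VV n₁ n₂) : (doubleStarSub n₁ n₂).Reachable x c1 := by
  have A {x y : VV n₁ n₂} (h : R x y) : (doubleStarSub n₁ n₂).Reachable x y :=
    ((adj_iff _ _).2 h).reachable
  rcases x with (x | i | j) | ⟨⟩
  · fin_cases x
    · exact A R.e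
    · exact Reachable.refl _
  · exact (A (R.a' i)).trans (A R.e)
  · exact A (R.b' j)
  · exact (A (R.f' ⟨0, h₂⟩ rfl)).trans (A (R.b' _))

lemma col2 (h₁ : 1 ≤ n₁) {x y z : VV n₁ n₂} (h1 : R x y) (h2 : R y z) (hxz : x ≠ z) :
    col s(x, y) ≠ col s(y, z) := by
  cases h1 <;> cases h2 <;> simp [col, g, Fin.ext_iff] at hxz ⊢ <;> omega

lemma col3 {x y z t : VV n₁ n₂} (h1 : R x y) (h2 : R y z) (h3 : R z t) (hxz : x ≠ z)
    (hyt : y ≠ t) : col s(x, y) ≠ col s(z, t) := by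
  cases h1 <;> cases h2 <;> cases h3 <;> simp [col, g, Fin.ext_iff] at hxz hyt ⊢ <;> omega

lemma path_proper (h₁ : 1 ≤ n₁) {x y : VV n₁ n₂} (p : (doubleStarSub n₁ n₂).Walk x y) (hp : p.IsPath) :
    p.IsDistProper 2 col := by
  intro i j hi hj hij hj2
  have hl := p.length_edges
  have inj := hp.getVert_injOn
  have ed (k : ℕ) (hk : k < p.edges.length) :
      p.edges[k] = s(p.getVert k, p.getVert (k+1)) := by
    exact p.getElem_edges hk
  have ad (k : ℕ) (hk : k < p.length) : R (p.getVert k) (p.getVert (k+1)) :=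
    (adj_iff _ _).1 (p.adj_getVert_succ hk)
  have ne (k : ℕ) (hk : k + 1 < p.length) : p.getVert k ≠ p.getVert (k+1+1) := by
    intro h
    have := inj (by simp; omega) (by simp; omega) h
    omega
  rw [ed i hi, ed j hj]
  obtain rfl | rfl : j = i + 1 ∨ j = i + 1 + 1 := by omega
  · exact col2 h₁ (ad _ (by omega)) (ad _ (by omega)) (ne _ (by omega))
  · exact col3 (ad _ (by omega)) (ad _ (by omega)) (ad _ (by omega))
      (ne _ (by omega)) (ne _ (by omega))

lemma upper (h₁ : 1 ≤ n₁) (h₂ : 1 ≤ n₂) :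
    (doubleStarSub n₁ n₂).IsPCColoring 2 (n₁ + n₂ + 1) col := by
  constructor
  · intro e
    induction e with | _ x y
    intro h
    have h := (adj_iff _ _).1 h
    cases h <;> simp [col, g] <;> omega
  · intro u v _
    obtain ⟨p, hp⟩ := ((conn h₂ u).trans (conn h₂ v).symm).exists_isPath
    exact ⟨p, hp, path_proper h₁ p hp⟩

end DSS

/-- For `n₁, n₂ ≥ 1`, the tree `T¹(n₁,n₂)` has `n = n₁ + n₂ + 3` vertices and
`pc_{1,2}(T¹(n₁,n₂)) = n - 2`. -/
theorem pc_doubleStarSub (n₁ n₂ : ℕ) (h₁ : 1 ≤ n₁) (h₂ : 1 ≤ n₂) :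
    Fintype.card ((Fin 2 ⊕ (Fin n₁ ⊕ Fin n₂)) ⊕ Unit) = n₁ + n₂ + 3 ∧
      (doubleStarSub n₁ n₂).pc 2 = (n₁ + n₂ + 3) - 2 := by
  refine ⟨by simp; omega, ?_⟩
  apply le_antisymm
  · exact Nat.sInf_le ⟨_, DSS.upper h₁ h₂⟩
  · refine le_csInf ⟨_, _, DSS.upper h₁ h₂⟩ ?_
    rintro k ⟨c, hc⟩
    exact DSS.lower hc
end

section
/- The cycles on 3, 4 and 5 vertices satisfy pc_{1,2}(C₃) = 1, pc_{1,2}(C₄) = 2 and pc_{1,2}(C₅) = 3; that is, each cycle C_n with 3 ≤ n ≤ 5 has (1,2)-proper connection number n − 2. -/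
open SimpleGraph

theorem pc_aux_lower {V : Type*} {G : SimpleGraph V} {k : ℕ} {c : Sym2 V → ℕ}
    (h : G.IsPCColoring 2 k c) (hk : k ≤ 2) (u v : V) (huv : u ≠ v) (hn : ¬ G.Adj u v) :
    ∃ w, G.Adj u w ∧ G.Adj w v ∧ c s(u, w) ≠ c s(w, v) := by
  obtain ⟨h1, h2⟩ := h
  obtain ⟨p, -, hp⟩ := h2 u v huv
  cases p with
  | nil => exact absurd rfl huv
  | cons a p =>
    cases p with
    | nil => exact absurd a hn
    | cons b p =>
      cases p with
      | nil =>
        refine ⟨_, a, b, ?_⟩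
        have := hp 0 1 (by simp) (by simp) (by omega) (by omega)
        simpa using this
      | cons d p =>
        exfalso
        have e1 := hp 0 1 (by simp) (by simp) (by omega) (by omega)
        have e2 := hp 0 2 (by simp) (by simp) (by omega) (by omega)
        have e3 := hp 1 2 (by simp) (by simp) (by omega) (by omega)
        simp only [Walk.edges_cons, List.getElem_cons_zero, List.getElem_cons_succ] at e1 e2 e3
        have f1 := h1 _ ((G.mem_edgeSet).2 a)
        have f2 := h1 _ ((G.mem_edgeSet).2 b)
        have f3 := h1 _ ((G.mem_edgeSet).2 d)
        omega

theorem pc_aux_upper {V : Type*} {G : SimpleGraph V} {k : ℕ} {c : Sym2 V → ℕ}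
    (h1 : ∀ u v, G.Adj u v → c s(u, v) < k)
    (h2 : ∀ u v, u ≠ v → G.Adj u v ∨ ∃ w, G.Adj u w ∧ G.Adj w v ∧ c s(u, w) ≠ c s(w, v)) :
    G.IsPCColoring 2 k c := by
  refine ⟨fun e => Sym2.ind (fun u v he => h1 u v he) e, fun u v huv => ?_⟩
  rcases h2 u v huv with a | ⟨w, a, b, hc⟩
  · refine ⟨Walk.cons a Walk.nil, by simp [huv], ?_⟩
    intro i j hi hj hij _
    simp at hi hj
    omega
  · refine ⟨Walk.cons a (Walk.cons b Walk.nil), by simp [huv, a.ne, b.ne], ?_⟩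
    intro i j hi hj hij _
    simp at hi hj
    obtain rfl : i = 0 := by omega
    obtain rfl : j = 1 := by omega
    simpa using hc

theorem pc_aux_eq {V : Type*} {G : SimpleGraph V} {k : ℕ}
    (hu : ∃ c, G.IsPCColoring 2 k c) (hl : ∀ j c, G.IsPCColoring 2 j c → k ≤ j) :
    G.pc 2 = k :=
  le_antisymm (Nat.sInf_le hu) (le_csInf ⟨k, hu⟩ (by rintro j ⟨c, hc⟩; exact hl j c hc))

/-- `pc_{1,2}(C₃) = 1`, `pc_{1,2}(C₄) = 2` and `pc_{1,2}(C₅) = 3`; that is,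
each cycle `C_n` with `3 ≤ n ≤ 5` has `(1,2)`-proper connection number `n - 2`. -/
theorem pc_small_cycles :
    (SimpleGraph.cycleGraph 3).pc 2 = 1 ∧
      (SimpleGraph.cycleGraph 4).pc 2 = 2 ∧
      (SimpleGraph.cycleGraph 5).pc 2 = 3 := by
  refine ⟨pc_aux_eq ⟨fun _ => 0, pc_aux_upper (by decide) (by decide)⟩ ?_,
    pc_aux_eq ⟨fun e => if e = s(0, 1) ∨ e = s(2, 3) then 0 else 1,
      pc_aux_upper (by decide) (by decide)⟩ ?_,
    pc_aux_eq ⟨fun e => if e = s(0, 1) ∨ e = s(2, 3) then 0 else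
      if e = s(1, 2) ∨ e = s(3, 4) then 1 else 2,
      pc_aux_upper (by decide) (by decide)⟩ ?_⟩
  · intro j c h
    have := h.1 s(0, 1) (by rw [mem_edgeSet]; decide)
    omega
  · intro j c h
    by_contra hj
    obtain ⟨w, a, b, hc⟩ := pc_aux_lower h (by omega) 0 2 (by decide) (by decide)
    have f1 := h.1 _ ((mem_edgeSet _).2 a)
    have f2 := h.1 _ ((mem_edgeSet _).2 b)
    omega
  · intro j c h
    by_contra hj
    have key : ∀ u m v : Fin 5, u ≠ v → ¬ (cycleGraph 5).Adj u v →
        (∀ w, (cycleGraph 5).Adj u w → (cycleGraph 5).Adj w v → w = m) →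
        c s(u, m) ≠ c s(m, v) := by
      intro u m v huv hn hm
      obtain ⟨w, a, b, hc⟩ := pc_aux_lower h (by omega) u v huv hn
      rwa [hm w a b] at hc
    have k0 := key 0 1 2 (by decide) (by decide) (by decide)
    have k1 := key 1 2 3 (by decide) (by decide) (by decide)
    have k2 := key 2 3 4 (by decide) (by decide) (by decide)
    have k3 := key 3 4 0 (by decide) (by decide) (by decide)
    have k4 := key 4 0 1 (by decide) (by decide) (by decide)
    have f0 := h.1 s(0, 1) (by rw [mem_edgeSet]; decide)
    have f1 := h.1 s(1, 2) (by rw [mem_edgeSet]; decide)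
    have f2 := h.1 s(2, 3) (by rw [mem_edgeSet]; decide)
    have f3 := h.1 s(3, 4) (by rw [mem_edgeSet]; decide)
    have f4 := h.1 s(4, 0) (by rw [mem_edgeSet]; decide)
    omega
end
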